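/- The map B_0 : DEnd_0(n) → LDO(n), B_0(f) := f_0 (using the identifications [(Ω_*)^{⊗n}]_0 ≅ Loc(E)^{⊗n} and Ω_0 ≅ Loc(E)), induces an isomorphism H_0(DEnd_*(n), δ) ≅ {A ∈ LDO(n) : χ(A ∘ d/dx^i_j) = 0 for all 1 ≤ i ≤ N, 1 ≤ j ≤ n} / {A ∈ LDO(n) : χ(A) = 0}. -/

import Mathlib

/-!
Local functions form a commutative algebra `Loc N` on which `∂/∂x^i`, `∂/∂u_J` and the total
derivatives act as derivations, so every operator can be studied on `Loc N` (`Restr`, `RepM`).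

A polarized operator `Σ_a q_a (d/dx)^{I_1} (P_a f)`, where `P_a` collects everything that does not
involve `I_1`, can be rewritten with its coefficients on the right, `Σ_a (d/dx)^{I_1} (r_a P_a f)`.
Two facts make right coefficients useful.

* They are determined by the operator (`presT_unique`). On products of exponentials
  `exp (t Σ_i ξ_{j,i} x^i + Σ_J η_{j,J} u_J)` an operator takes values `exp(⋯) · p(t)` with `p` a
  polynomial in `t`, whose leading coefficient is a polynomial in `ξ, η` with the `r_a` of highest
  order as coefficients.
* Moving a coefficient from left to right is integration by parts, so the right coefficients with
  `I_1 = 0` are precisely the characteristic. Hence `χ(A) = 0` if and only if the right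
  coefficients of `A` vanish at `I_1 = 0` (`chiZero_iff`). In particular `χ(d/dx^i ∘ A) = 0`, since
  composing with `d/dx^i` shifts `I_1`.

The characteristic condition on `A ∘ d/dx^i_j` only makes sense because precomposition preserves
local differential operators. This is `IsR_pre`; the point is that commuting `(∂/∂u)^α` past
`d/dx^i` lowers jet order by at most one (`UP_eD`), so the finiteness condition on coefficients
persists.

In right coefficients the differential `ω ↦ Σ_i dx^i ∧ (d/dx^i ∘ ω)` on operator-valued forms is the
Koszul differential of the polynomial ring in the variables recorded by `I_1`. It has an explicit
contracting homotopy away from the constants in top degree (`kd_kh`), that is, a closed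
operator-valued form is exact as soon as its top-degree part has vanishing characteristic
(`exact_dL`). Induction on the degree of the inputs turns this into `exists_lift`: a cycle `G` of
the endomorphism complex all of whose components with top-degree output have vanishing
characteristic is `δ X`, where `X` has no component with top-degree output.

For a `0`-cycle `F`, the cycle equation at the inputs of total degree one exhibits
`F_0 ∘ d/dx^i_j` as a sum of operators `d/dx^l ∘ B_l`, so its characteristic vanishes; the same
holds for the component `(δ H)_0` of a boundary. Injectivity is `exists_lift` applied to `F`. For
surjectivity, let `M` be the matrix with `A` as its only component; `exists_lift` applied to `δ M`
gives `X` with `δ X = δ M`, and `M - X` is a cycle with leading component `A`.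
-/

open scoped BigOperators

namespace JetBundle

/-- Multi-indices `J = (j_1,…,j_N)`. -/
abbrev MI (N : ℕ) := Fin N → ℕ

/-- A point of the infinite jet bundle `J^∞E`, with coordinates `(x^i, u_J)`. -/
abbrev JetPt (N : ℕ) := (Fin N → ℝ) × (MI N → ℝ)

/-- Real-valued functions on the infinite jet bundle. -/
abbrev Fn (N : ℕ) := JetPt N → ℝ

/-- Partial derivative with respect to the base coordinate `x^i`. -/
noncomputable def pderivX {N : ℕ} (i : Fin N) (f : Fn N) : Fn N :=
  fun p => deriv (fun t => f (Function.update p.1 i t, p.2)) (p.1 i)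

/-- Partial derivative with respect to the jet coordinate `u_J`. -/
noncomputable def pderivU {N : ℕ} (J : MI N) (f : Fn N) : Fn N :=
  fun p => deriv (fun t => f (p.1, Function.update p.2 J t)) (p.2 J)

/-- `iJ` : the multi-index `J` with its `i`-th entry increased by `1`. -/
def inc {N : ℕ} (i : Fin N) (J : MI N) : MI N := Function.update J i (J i + 1)

/-- The total derivative `d/dx^i = ∂/∂x^i + Σ_J u_{iJ} ∂/∂u_J`. -/
noncomputable def Dtot {N : ℕ} (i : Fin N) (f : Fn N) : Fn N :=
  fun p => pderivX i f p + ∑' J : MI N, p.2 (inc i J) * pderivU J f p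

/-- Iterated total derivative `(d/dx)^I`. -/
noncomputable def DPow {N : ℕ} (I : MI N) : Fn N → Fn N :=
  (List.finRange N).foldr (fun i g => (Dtot i)^[I i] ∘ g) id

/-- Iterated vertical derivative `(∂/∂u)^α` for a finitely supported exponent `α`. -/
noncomputable def UPow {N : ℕ} (α : MI N →₀ ℕ) : Fn N → Fn N :=
  α.support.toList.foldr (fun J g => (pderivU J)^[α J] ∘ g) id

/-- A local function: a smooth function of the base coordinates and
finitely many jet coordinates `u_J`. -/
def IsLocal {N : ℕ} (f : Fn N) : Prop :=
  ∃ (S : Finset (MI N)) (g : ((Fin N → ℝ) × (↥S → ℝ)) → ℝ),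
    ContDiff ℝ (⊤ : ℕ∞) g ∧ ∀ p : JetPt N, f p = g (p.1, fun J => p.2 J.1)

/-- The formal differential degree of an exponent `α`: the maximal `|J|` with `α J ≠ 0`. -/
def degf {N : ℕ} (α : MI N →₀ ℕ) : ℕ := α.support.sup fun J => ∑ i, J i

/-- Index type for the coefficients of an `n`-multilinear local differential operator:
a tuple of multi-indices `(I_1,…,I_n)` and vertical exponents `(α_1,…,α_n)`. -/
abbrev Idx (N n : ℕ) := (Fin n → MI N) × (Fin n → (MI N →₀ ℕ))

/-- Coefficient data of an `n`-multilinear local differential operator. -/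
abbrev OpData (N n : ℕ) := Idx N n → Fn N

/-- `n`-multilinear operators on functions on the jet bundle. -/
abbrev Op (N n : ℕ) := (Fin n → Fn N) → Fn N

/-- An `n`-tuple of local functions. -/
def LocalTuple {N n : ℕ} (f : Fin n → Fn N) : Prop := ∀ j, IsLocal (f j)

/-- Coefficient data is admissible if all coefficients are local functions and, for each `m`,
only finitely many coefficients with `Σ_j deg_f(α_j) ≤ m` are nonzero. -/
def Good {N n : ℕ} (q : OpData N n) : Prop :=
  (∀ Iα, IsLocal (q Iα)) ∧
    ∀ m : ℕ, {Iα : Idx N n | q Iα ≠ 0 ∧ ∑ j, degf (Iα.2 j) ≤ m}.Finite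

/-- The (unpolarized) realization of coefficient data:
`A(f_1,…,f_n) = Σ p_{I,α} Π_j (d/dx)^{I_j} (∂/∂u)^{α_j} f_j`. -/
noncomputable def realizeU {N n : ℕ} (q : OpData N n) (f : Fin n → Fn N) : Fn N :=
  fun pt => ∑' Iα : Idx N n, q Iα pt * ∏ j, DPow (Iα.1 j) (UPow (Iα.2 j) (f j)) pt

/-- The polarized realization of coefficient data: the slot `I_1` records powers of
`d/dy_1 = Σ_j d/dx_j`, i.e. total derivatives applied to the whole product, while for `j ≥ 2`
the slot `I_j` records powers of `d/dy_j = d/dx_j` acting on the `j`-th argument: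
`A(f_1,…,f_n) = Σ q_{I;α} (d/dx)^{I_1} [ (∂/∂u)^{α_1}f_1 · Π_{j≥2} (d/dx)^{I_j}(∂/∂u)^{α_j} f_j ]`. -/
noncomputable def realizeP {N n : ℕ} [NeZero n] (q : OpData N n) (f : Fin n → Fn N) : Fn N :=
  fun pt => ∑' Iα : Idx N n, q Iα pt *
    DPow (Iα.1 0) (fun p => ∏ j,
      if j = (0 : Fin n) then UPow (Iα.2 j) (f j) p
      else DPow (Iα.1 j) (UPow (Iα.2 j) (f j)) p) pt

/-- The characteristic, on polarized coefficient data: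
`χ(q)_{(0,I_2,…,I_n);α} := Σ_{I_1} (−1)^{|I_1|} (d/dx)^{I_1} q_{I_1,I_2,…,I_n;α}`. -/
noncomputable def chiData {N n : ℕ} [NeZero n] (q : OpData N n) : OpData N n :=
  fun Iα =>
    if Iα.1 0 = 0 then
      fun pt => ∑' K : MI N,
        (-1 : ℝ) ^ (∑ i, K i) * DPow K (q (Function.update Iα.1 0 K, Iα.2)) pt
    else 0

/-- `q` is a polarized presentation of the operator `A` (on local functions). -/
def Presents {N n : ℕ} [NeZero n] (q : OpData N n) (A : Op N n) : Prop :=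
  ∀ f, LocalTuple f → ∀ pt, A f pt = realizeP q f pt

/-- `A` is an `n`-multilinear local differential operator (unpolarized form). -/
def IsLDO {N n : ℕ} (A : Op N n) : Prop :=
  ∃ q : OpData N n, Good q ∧ ∀ f, LocalTuple f → ∀ pt, A f pt = realizeU q f pt

/-- `A` is an `n`-multilinear local differential operator, given by a polarized presentation. -/
def IsPLDO {N n : ℕ} [NeZero n] (A : Op N n) : Prop :=
  ∃ q : OpData N n, Good q ∧ Presents q A

/-- `A` is an `n`-multilinear local differential operator with vanishing characteristic. -/
def ChiZero {N n : ℕ} [NeZero n] (A : Op N n) : Prop :=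
  ∃ q : OpData N n, Good q ∧ Presents q A ∧
    ∀ f, LocalTuple f → ∀ pt, realizeP (chiData q) f pt = 0

/-- Precomposition `A ∘ d/dx^i_j` with the total derivative acting on the `j`-th argument. -/
noncomputable def precompD {N n : ℕ} (A : Op N n) (i : Fin N) (j : Fin n) : Op N n :=
  fun f => A (Function.update f j (Dtot i (f j)))

/-- A horizontal form, recorded by its coefficients on the basis
`(dx)^ε = (dx^1)^{ε^1} ∧ ⋯ ∧ (dx^N)^{ε^N}`, `ε : Fin N → Bool`. -/
abbrev Form (N : ℕ) := (Fin N → Bool) → Fn N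

/-- The form-degree `|ε|`. -/
def wt {N : ℕ} (ε : Fin N → Bool) : ℕ := ∑ i, if ε i then 1 else 0

/-- The sign exponent: the number of entries of `ε` below `i` which are set. -/
def pos {N : ℕ} (i : Fin N) (ε : Fin N → Bool) : ℕ := ∑ l, if l < i ∧ ε l then 1 else 0

/-- The horizontal differential `d_H ω = Σ_i dx^i ∧ (d/dx^i) ω`. -/
noncomputable def dH {N : ℕ} (ω : Form N) : Form N :=
  fun δ pt => ∑ i : Fin N,
    if δ i then (-1 : ℝ) ^ pos i δ * Dtot i (ω (Function.update δ i false)) pt else 0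

/-- A matrix of operators acting on horizontal forms (linear case). -/
abbrev FormOp (N : ℕ) := (Fin N → Bool) → (Fin N → Bool) → (Fn N → Fn N)

/-- Application of a matrix of operators to a form. -/
noncomputable def applyFO {N : ℕ} (M : FormOp N) (ω : Form N) : Form N :=
  fun δ pt => ∑ ε : Fin N → Bool, M ε δ (ω ε) pt

/-- A degree element of `DEnd(n)`: a matrix indexed by basis multidegrees of the inputs
`(ε_1,…,ε_n)` and of the output `δ`, with `n`-multilinear operator entries. -/
abbrev DMat (N n : ℕ) := (Fin n → (Fin N → Bool)) → (Fin N → Bool) → Op N n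

/-- All matrix entries are local differential operators. -/
def LDOMat {N n : ℕ} [NeZero n] (F : DMat N n) : Prop := ∀ εs δ, IsPLDO (F εs δ)

/-- `F` represents a degree-`k` map of the regraded horizontal complexes
(`Ω_i := Ω^{N−i,0}`): the entry at `(ε⃗, δ)` vanishes unless
`N − wt δ = k + Σ_j (N − wt ε_j)`. -/
def GradedMat {N n : ℕ} (k : ℤ) (F : DMat N n) : Prop :=
  ∀ εs δ, F εs δ ≠ 0 → (wt δ : ℤ) = (N : ℤ) - k - ∑ j, ((N : ℤ) - (wt (εs j) : ℤ))

/-- The differential `(δf)_s = d_H f_s − (−1)^k f_{s−1} d_H^{⊗n}` of the complex `DEnd_*(n)`,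
written out on matrix entries. -/
noncomputable def deltaMat {N n : ℕ} (k : ℤ) (F : DMat N n) : DMat N n :=
  fun εs δ g =>
    (fun pt => ∑ i : Fin N,
      if δ i then (-1 : ℝ) ^ pos i δ * Dtot i (F εs (Function.update δ i false) g) pt else 0)
    -
    ((-1 : ℝ) ^ k) • (fun pt => ∑ j : Fin n, ∑ i : Fin N,
      if εs j i = false then
        (-1 : ℝ) ^ ((∑ l ∈ Finset.univ.filter fun l => l < j, wt (εs l)) + pos i (εs j)) *
          F (Function.update εs j (Function.update (εs j) i true)) δ
            (Function.update g j (Dtot i (g j))) pt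
      else 0)

/-- A matrix of operators vanishes (on local arguments). -/
def MatZeroLoc {N n : ℕ} (F : DMat N n) : Prop :=
  ∀ εs δ g, LocalTuple g → ∀ pt, F εs δ g pt = 0

/-- Two matrices of operators agree (on local arguments). -/
def MatEqLoc {N n : ℕ} (F G : DMat N n) : Prop :=
  ∀ εs δ g, LocalTuple g → ∀ pt, F εs δ g pt = G εs δ g pt

/-- The projection `B_0 : DEnd_0(n) → LDO(n)`, i.e. the component `f_0` on the identifications
`[(Ω_*)^{⊗n}]_0 ≅ Loc(E)^{⊗n}`, `Ω_0 ≅ Loc(E)`. -/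
def B0 {N n : ℕ} (F : DMat N n) : Op N n := F (fun _ _ => true) fun _ => true

/-- A form with coefficients in `LDO(n)`: an element of the operator complex `O^*(n)`. -/
abbrev OForm (N n : ℕ) := (Fin N → Bool) → Op N n

/-- The differential of the operator complex: `d(A (dx)^ε) = Σ_i (d/dx^i ∘ A) dx^i ∧ (dx)^ε`. -/
noncomputable def dO {N n : ℕ} (ω : OForm N n) : OForm N n :=
  fun δ g pt => ∑ i : Fin N,
    if δ i then (-1 : ℝ) ^ pos i δ * Dtot i (ω (Function.update δ i false) g) pt else 0

/-- An element of `O^*(n)` concentrated in degree `k`. -/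
def OGraded {N n : ℕ} (k : ℕ) (ω : OForm N n) : Prop := ∀ δ, ω δ ≠ 0 → wt δ = k

/-- All coefficients are local differential operators. -/
def OLDO {N n : ℕ} [NeZero n] (ω : OForm N n) : Prop := ∀ δ, IsPLDO (ω δ)

/-- An element of `O^*(n)` vanishes on local arguments. -/
def OZeroLoc {N n : ℕ} (ω : OForm N n) : Prop :=
  ∀ δ g, LocalTuple g → ∀ pt, ω δ g pt = 0

/-- Two elements of `O^*(n)` agree on local arguments. -/
def OEqLoc {N n : ℕ} (ω η : OForm N n) : Prop :=
  ∀ δ g, LocalTuple g → ∀ pt, ω δ g pt = η δ g pt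

/-- The Euler operator `E(L dx^1∧⋯∧dx^N) = Σ_I (−1)^{|I|} (d/dx)^I (∂L/∂u_I)`. -/
noncomputable def Euler {N : ℕ} (L : Fn N) : Fn N :=
  fun pt => ∑' I : MI N, (-1 : ℝ) ^ (∑ i, I i) * DPow I (pderivU I L) pt

end JetBundle

/-! ### Local functions and total derivatives -/

namespace JetBundle

/-- Projection of a jet to the base coordinates and the jet coordinates indexed by `S`. -/
def rest {N : ℕ} (S : Finset (MI N)) (p : JetPt N) : (Fin N → ℝ) × (↥S → ℝ) :=
  (p.1, fun J => p.2 J.1)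

/-- `g` is a smooth function of finitely many coordinates representing `f`. -/
def Rep {N : ℕ} (S : Finset (MI N)) (g : ((Fin N → ℝ) × (↥S → ℝ)) → ℝ) (f : Fn N) : Prop :=
  ContDiff ℝ (⊤ : ℕ∞) g ∧ ∀ p : JetPt N, f p = g (rest S p)

theorem Rep.isLocal {N : ℕ} {S : Finset (MI N)} {g} {f : Fn N} (h : Rep S g f) : IsLocal f :=
  ⟨S, g, h⟩

theorem Rep.mono {N : ℕ} {S T : Finset (MI N)} {g} {f : Fn N} (h : Rep S g f) (hST : S ⊆ T) :
    ∃ g', Rep T g' f := by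
  refine ⟨fun z => g (z.1, fun J => z.2 ⟨J.1, hST J.2⟩), ?_, fun p => h.2 p⟩
  apply h.1.comp
  fun_prop

theorem exists_rep₂ {N : ℕ} {f f' : Fn N} (h : IsLocal f) (h' : IsLocal f') :
    ∃ S g g', Rep S g f ∧ Rep S g' f' := by
  classical
  obtain ⟨S, g, hg⟩ := h
  obtain ⟨S', g', hg'⟩ := h'
  obtain ⟨a, ha⟩ := Rep.mono (T := S ∪ S') hg Finset.subset_union_left
  obtain ⟨b, hb⟩ := Rep.mono (T := S ∪ S') hg' Finset.subset_union_right
  exact ⟨_, a, b, ha, hb⟩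

variable {N : ℕ}

theorem IsLocal.add {f f' : Fn N} (h : IsLocal f) (h' : IsLocal f') : IsLocal (f + f') := by
  obtain ⟨S, g, g', a, b⟩ := exists_rep₂ h h'
  exact Rep.isLocal (S := S) (g := g + g') ⟨a.1.add b.1, fun p => by simp [a.2, b.2]⟩

theorem IsLocal.mul {f f' : Fn N} (h : IsLocal f) (h' : IsLocal f') : IsLocal (f * f') := by
  obtain ⟨S, g, g', a, b⟩ := exists_rep₂ h h'
  exact Rep.isLocal (S := S) (g := g * g') ⟨a.1.mul b.1, fun p => by simp [a.2, b.2]⟩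

/-- The algebra of local functions. -/
def Loc (N : ℕ) : Subalgebra ℝ (Fn N) where
  carrier := {f | IsLocal f}
  mul_mem' := IsLocal.mul
  add_mem' := IsLocal.add
  algebraMap_mem' c := ⟨∅, fun _ => c, contDiff_const, fun _ => rfl⟩

theorem mem_Loc {f : Fn N} : f ∈ Loc N ↔ IsLocal f := Iff.rfl

/-- The direction `∂/∂x^i`. -/
def vX (S : Finset (MI N)) (i : Fin N) : (Fin N → ℝ) × (↥S → ℝ) := (Pi.single i 1, 0)

/-- The direction `∂/∂u_J`. -/
def vU (S : Finset (MI N)) (J : MI N) : (Fin N → ℝ) × (↥S → ℝ) :=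
  (0, fun K => if K.1 = J then 1 else 0)

theorem Rep.pderivX {S : Finset (MI N)} {g} {f : Fn N} (h : Rep S g f) (i : Fin N) (p : JetPt N) :
    pderivX i f p = fderiv ℝ g (rest S p) (vX S i) := by
  have h1 : HasDerivAt (fun t => rest S (Function.update p.1 i t, p.2)) (vX S i) (p.1 i) := by
    exact HasDerivAt.prodMk (hasDerivAt_update _ _ _)
      (hasDerivAt_const (p.1 i) (fun J : ↥S => p.2 J.1))
  have h2 : HasFDerivAt g (fderiv ℝ g (rest S p)) (rest S (Function.update p.1 i (p.1 i), p.2)) := by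
    rw [Function.update_eq_self]
    exact (h.1.differentiable (by simp) _).hasFDerivAt
  have h3 := h2.comp_hasDerivAt _ h1
  rw [← h3.deriv]
  unfold JetBundle.pderivX
  congr 1
  ext t
  exact h.2 _

theorem Rep.pderivU {S : Finset (MI N)} {g} {f : Fn N} (h : Rep S g f) (J : MI N) (p : JetPt N) :
    pderivU J f p = fderiv ℝ g (rest S p) (vU S J) := by
  have h1 : HasDerivAt (fun t => rest S (p.1, Function.update p.2 J t)) (vU S J) (p.2 J) := by
    refine HasDerivAt.prodMk (hasDerivAt_const _ _) (hasDerivAt_pi.2 fun K => ?_)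
    by_cases hK : K.1 = J
    · simp only [hK, if_true, Function.update_self]
      exact hasDerivAt_id _
    · simp only [hK, if_false]
      rw [show (fun x => Function.update p.2 J x K.1) = fun _ => p.2 K.1 by
        ext x; rw [Function.update_of_ne hK]]
      exact hasDerivAt_const _ _
  have h2 : HasFDerivAt g (fderiv ℝ g (rest S p)) (rest S (p.1, Function.update p.2 J (p.2 J))) := by
    rw [Function.update_eq_self]
    exact (h.1.differentiable (by simp) _).hasFDerivAt
  have h3 := h2.comp_hasDerivAt _ h1
  rw [← h3.deriv]
  unfold JetBundle.pderivU
  congr 1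
  ext t
  exact h.2 _

theorem Rep.dir {S : Finset (MI N)} {g : ((Fin N → ℝ) × (↥S → ℝ)) → ℝ}
    (h : ContDiff ℝ (⊤ : ℕ∞) g) (v : (Fin N → ℝ) × (↥S → ℝ)) :
    ContDiff ℝ (⊤ : ℕ∞) (fun z => fderiv ℝ g z v) :=
  (h.fderiv_right (m := (⊤ : ℕ∞)) (by simp)).clm_apply contDiff_const

theorem Rep.repX {S : Finset (MI N)} {g} {f : Fn N} (h : Rep S g f) (i : Fin N) :
    Rep S (fun z => fderiv ℝ g z (vX S i)) (JetBundle.pderivX i f) := ⟨Rep.dir h.1 _, h.pderivX i⟩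

theorem Rep.repU {S : Finset (MI N)} {g} {f : Fn N} (h : Rep S g f) (J : MI N) :
    Rep S (fun z => fderiv ℝ g z (vU S J)) (JetBundle.pderivU J f) := ⟨Rep.dir h.1 _, h.pderivU J⟩

theorem fderiv_dir_comm {S : Finset (MI N)} {g : ((Fin N → ℝ) × (↥S → ℝ)) → ℝ}
    (h : ContDiff ℝ (⊤ : ℕ∞) g) (v w z : (Fin N → ℝ) × (↥S → ℝ)) :
    fderiv ℝ (fun z => fderiv ℝ g z v) z w = fderiv ℝ (fun z => fderiv ℝ g z w) z v := by
  have hd : DifferentiableAt ℝ (fderiv ℝ g) z :=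
    (h.fderiv_right (m := (⊤ : ℕ∞)) (by simp)).differentiable (by simp) z
  have hs : IsSymmSndFDerivAt ℝ g z := h.contDiffAt.isSymmSndFDerivAt (by
    rw [minSmoothness_of_isRCLikeNormedField]; exact WithTop.coe_le_coe.2 le_top)
  rw [fderiv_clm_apply hd (differentiableAt_const _), fderiv_clm_apply hd (differentiableAt_const _)]
  simpa using hs w v

/-- `∂/∂x^i` as a derivation of the algebra of local functions. -/
noncomputable def dX (i : Fin N) : Derivation ℝ (Loc N) (Loc N) :=
  Derivation.mk'
    { toFun := fun f => ⟨pderivX i f.1, by obtain ⟨S, g, h⟩ := f.2; exact (Rep.repX h i).isLocal⟩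
      map_add' := fun a b => by
        obtain ⟨S, g, g', ha, hb⟩ := exists_rep₂ a.2 b.2
        have hab : Rep S (g + g') (a.1 + b.1) := ⟨ha.1.add hb.1, fun p => by simp [ha.2, hb.2]⟩
        ext p
        simp [hab.pderivX, ha.pderivX, hb.pderivX,
          fderiv_add (ha.1.differentiable (by simp) _) (hb.1.differentiable (by simp) _)]
      map_smul' := fun c a => by
        obtain ⟨S, g, ha⟩ := a.2
        have ha : Rep S g a.1 := ha
        have hab : Rep S (c • g) (c • a.1) := ⟨contDiff_const.smul ha.1, fun p => by simp [ha.2]⟩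
        ext p
        simp [hab.pderivX, ha.pderivX,
          fderiv_const_smul (ha.1.differentiable (by simp) _)] }
    (fun a b => by
        obtain ⟨S, g, g', ha, hb⟩ := exists_rep₂ a.2 b.2
        have hab : Rep S (g * g') (a.1 * b.1) := ⟨ha.1.mul hb.1, fun p => by simp [ha.2, hb.2]⟩
        ext p
        simp [hab.pderivX, ha.pderivX, hb.pderivX, ha.2, hb.2,
          fderiv_mul (ha.1.differentiable (by simp) _) (hb.1.differentiable (by simp) _)])

/-- `∂/∂u_J` as a derivation of the algebra of local functions. -/
noncomputable def dU (J : MI N) : Derivation ℝ (Loc N) (Loc N) :=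
  Derivation.mk'
    { toFun := fun f => ⟨pderivU J f.1, by obtain ⟨S, g, h⟩ := f.2; exact (Rep.repU h J).isLocal⟩
      map_add' := fun a b => by
        obtain ⟨S, g, g', ha, hb⟩ := exists_rep₂ a.2 b.2
        have hab : Rep S (g + g') (a.1 + b.1) := ⟨ha.1.add hb.1, fun p => by simp [ha.2, hb.2]⟩
        ext p
        simp [hab.pderivU, ha.pderivU, hb.pderivU,
          fderiv_add (ha.1.differentiable (by simp) _) (hb.1.differentiable (by simp) _)]
      map_smul' := fun c a => by
        obtain ⟨S, g, ha⟩ := a.2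
        have ha : Rep S g a.1 := ha
        have hab : Rep S (c • g) (c • a.1) := ⟨contDiff_const.smul ha.1, fun p => by simp [ha.2]⟩
        ext p
        simp [hab.pderivU, ha.pderivU,
          fderiv_const_smul (ha.1.differentiable (by simp) _)] }
    (fun a b => by
        obtain ⟨S, g, g', ha, hb⟩ := exists_rep₂ a.2 b.2
        have hab : Rep S (g * g') (a.1 * b.1) := ⟨ha.1.mul hb.1, fun p => by simp [ha.2, hb.2]⟩
        ext p
        simp [hab.pderivU, ha.pderivU, hb.pderivU, ha.2, hb.2,
          fderiv_mul (ha.1.differentiable (by simp) _) (hb.1.differentiable (by simp) _)])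

@[simp] theorem coe_dX (i : Fin N) (f : Loc N) : (dX i f : Fn N) = pderivX i f.1 := rfl
@[simp] theorem coe_dU (J : MI N) (f : Loc N) : (dU J f : Fn N) = pderivU J f.1 := rfl

theorem dX_dX (i j : Fin N) (f : Loc N) : dX i (dX j f) = dX j (dX i f) := by
  obtain ⟨S, g, h⟩ := f.2
  have h : Rep S g f.1 := h
  ext p
  simp only [coe_dX]
  rw [(h.repX j).pderivX, (h.repX i).pderivX, fderiv_dir_comm h.1]

theorem dU_dX (J : MI N) (j : Fin N) (f : Loc N) : dU J (dX j f) = dX j (dU J f) := by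
  obtain ⟨S, g, h⟩ := f.2
  have h : Rep S g f.1 := h
  ext p
  simp only [coe_dX, coe_dU]
  rw [(h.repX j).pderivU, (h.repU J).pderivX, fderiv_dir_comm h.1]

theorem dU_dU (J K : MI N) (f : Loc N) : dU J (dU K f) = dU K (dU J f) := by
  obtain ⟨S, g, h⟩ := f.2
  have h : Rep S g f.1 := h
  ext p
  simp only [coe_dU]
  rw [(h.repU K).pderivU, (h.repU J).pderivU, fderiv_dir_comm h.1]

/-- A local function depends on finitely many jet coordinates only. -/
theorem exists_supp (f : Loc N) : ∃ S : Finset (MI N), ∀ J ∉ S, dU J f = 0 := by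
  obtain ⟨S, g, h⟩ := f.2
  have h : Rep S g f.1 := h
  refine ⟨S, fun J hJ => ?_⟩
  ext p
  have : vU S J = 0 := by
    ext K
    · rfl
    · simp only [vU]
      rw [if_neg]
      · rfl
      · rintro rfl; exact hJ K.2
  simp [h.pderivU, this]

/-- The coordinate function `u_J`. -/
def uc (J : MI N) : Loc N :=
  ⟨fun p => p.2 J, {J}, fun z => z.2 ⟨J, by simp⟩, by fun_prop, fun _ => rfl⟩

/-- The coordinate function `x^i`. -/
def xc (i : Fin N) : Loc N := ⟨fun p => p.1 i, ∅, fun z => z.1 i, by fun_prop, fun _ => rfl⟩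

theorem dX_uc (i : Fin N) (J : MI N) : dX i (uc J) = 0 := by
  ext p; simp [uc, pderivX]

theorem dX_xc (i j : Fin N) : dX i (xc j) = if i = j then 1 else 0 := by
  ext p
  simp only [xc, pderivX, coe_dX]
  split_ifs with h
  · subst h; simp
  · simp [Function.update_of_ne (Ne.symm h)]

theorem dU_xc (J : MI N) (j : Fin N) : dU J (xc j) = 0 := by
  ext p; simp [xc, pderivU]

theorem dU_uc (J K : MI N) : dU J (uc K) = if J = K then 1 else 0 := by
  ext p
  simp only [uc, pderivU, coe_dU]
  split_ifs with h
  · subst h; simp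
  · simp [Function.update_of_ne (Ne.symm h)]

/-- The exponential `e = exp l` of a local function is an invertible local function. -/
theorem exists_exp (l : Loc N) : ∃ e : Loc N, IsUnit e ∧ (∀ i, dX i e = dX i l * e) ∧
    ∀ J, dU J e = dU J l * e := by
  obtain ⟨S, g, h⟩ := l.2
  have h : Rep S g l.1 := h
  have he : Rep S (fun z => Real.exp (g z)) (fun p => Real.exp (l.1 p)) :=
    ⟨Real.contDiff_exp.comp h.1, fun p => congrArg Real.exp (h.2 p)⟩
  have he' : Rep S (fun z => Real.exp (-g z)) (fun p => Real.exp (-l.1 p)) :=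
    ⟨Real.contDiff_exp.comp h.1.neg, fun p => congrArg (fun t => Real.exp (-t)) (h.2 p)⟩
  refine ⟨⟨_, he.isLocal⟩, IsUnit.of_mul_eq_one (⟨_, he'.isLocal⟩ : Loc N) ?_, ?_, ?_⟩
  · ext p
    simp [← Real.exp_add]
  · intro i
    ext p
    simp only [coe_dX, Subalgebra.coe_mul, Pi.mul_apply]
    rw [he.pderivX, h.pderivX, fderiv_exp (h.1.differentiable (by simp) _), h.2]
    simp [mul_comm]
  · intro i
    ext p
    simp only [coe_dU, Subalgebra.coe_mul, Pi.mul_apply]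
    rw [he.pderivU, h.pderivU, fderiv_exp (h.1.differentiable (by simp) _), h.2]
    simp [mul_comm]

theorem coe_DtotL (i : Fin N) (f : Loc N) (S : Finset (MI N)) (hS : ∀ J ∉ S, dU J f = 0) :
    Dtot i f.1 = (dX i f + ∑ J ∈ S, uc (inc i J) * dU J f : Loc N) := by
  ext p
  simp only [Dtot]
  rw [tsum_eq_sum (s := S)]
  · simp [uc]
  · intro J hJ
    have := congrFun (congrArg Subtype.val (hS J hJ)) p
    simp only [coe_dU] at this
    rw [this]; simp

theorem exists_supp₂ (a b : Loc N) : ∃ S : Finset (MI N), (∀ J ∉ S, dU J a = 0) ∧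
    (∀ J ∉ S, dU J b = 0) := by
  classical
  obtain ⟨S, hS⟩ := exists_supp a
  obtain ⟨T, hT⟩ := exists_supp b
  exact ⟨S ∪ T, fun J hJ => hS J (by simp_all), fun J hJ => hT J (by simp_all)⟩

/-- The total derivative `d/dx^i` as a derivation of the algebra of local functions. -/
noncomputable def dD (i : Fin N) : Derivation ℝ (Loc N) (Loc N) :=
  Derivation.mk'
    { toFun := fun f => ⟨Dtot i f.1, by
        obtain ⟨S, hS⟩ := exists_supp f
        rw [coe_DtotL i f S hS]; exact Subtype.property _⟩
      map_add' := fun a b => by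
        obtain ⟨S, ha, hb⟩ := exists_supp₂ a b
        apply Subtype.ext
        change Dtot i (a + b : Loc N).1 = Dtot i a.1 + Dtot i b.1
        rw [coe_DtotL i a S ha, coe_DtotL i b S hb,
          coe_DtotL i (a + b) S (fun J hJ => by simp [ha J hJ, hb J hJ])]
        rw [← Subalgebra.coe_add]
        congr 1
        simp only [map_add, mul_add, Finset.sum_add_distrib]
        ring
      map_smul' := fun c a => by
        obtain ⟨S, ha⟩ := exists_supp a
        apply Subtype.ext
        change Dtot i (c • a : Loc N).1 = c • Dtot i a.1
        rw [coe_DtotL i a S ha, coe_DtotL i (c • a) S (fun J hJ => by simp [ha J hJ])]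
        rw [← Subalgebra.coe_smul]
        congr 1
        simp only [Derivation.map_smul, smul_add, Finset.smul_sum, mul_smul_comm] }
    (fun a b => by
        obtain ⟨S, ha, hb⟩ := exists_supp₂ a b
        apply Subtype.ext
        change Dtot i (a * b : Loc N).1 = a.1 * Dtot i b.1 + b.1 * Dtot i a.1
        rw [coe_DtotL i a S ha, coe_DtotL i b S hb,
          coe_DtotL i (a * b) S (fun J hJ => by simp [ha J hJ, hb J hJ])]
        rw [← Subalgebra.coe_mul, ← Subalgebra.coe_mul, ← Subalgebra.coe_add]
        congr 1
        simp only [Derivation.leibniz, smul_eq_mul, mul_add, Finset.sum_add_distrib, Finset.mul_sum]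
        have e1 : ∑ x ∈ S, uc (inc i x) * (a * dU x b) = ∑ x ∈ S, a * (uc (inc i x) * dU x b) :=
          Finset.sum_congr rfl fun _ _ => by ring
        have e2 : ∑ x ∈ S, uc (inc i x) * (b * dU x a) = ∑ x ∈ S, b * (uc (inc i x) * dU x a) :=
          Finset.sum_congr rfl fun _ _ => by ring
        rw [e1, e2]
        ring)

@[simp] theorem coe_dD (i : Fin N) (f : Loc N) : (dD i f : Fn N) = Dtot i f.1 := rfl

theorem dD_eq (i : Fin N) (f : Loc N) (S : Finset (MI N)) (hS : ∀ J ∉ S, dU J f = 0) :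
    dD i f = dX i f + ∑ J ∈ S, uc (inc i J) * dU J f :=
  Subtype.ext (coe_DtotL i f S hS)

theorem dD_uc (i : Fin N) (K : MI N) : dD i (uc K) = uc (inc i K) := by
  rw [dD_eq i _ {K} (fun J hJ => by rw [dU_uc, if_neg (fun h => hJ (by rw [h]; exact Finset.mem_singleton_self K))])]
  simp [dX_uc, dU_uc]

theorem inc_comm (i j : Fin N) (J : MI N) : inc i (inc j J) = inc j (inc i J) := by
  ext k
  simp only [inc, Function.update_apply]
  grind

theorem inc_injective (i : Fin N) : Function.Injective (inc i : MI N → MI N) := by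
  intro J K h
  ext k
  have := congrFun h k
  simp only [inc, Function.update_apply] at this
  split_ifs at this with hk
  · subst hk; omega
  · exact this

theorem dD_dD (i j : Fin N) (f : Loc N) : dD i (dD j f) = dD j (dD i f) := by
  obtain ⟨S, hS⟩ := exists_supp f
  have key : ∀ i j : Fin N, dD i (dD j f) = dX i (dX j f) + ∑ J ∈ S, uc (inc i J) * dU J (dX j f)
      + ∑ K ∈ S, (uc (inc i (inc j K)) * dU K f + uc (inc j K) * (dX i (dU K f) +
        ∑ J ∈ S, uc (inc i J) * dU J (dU K f))) := by
    intro i j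
    rw [dD_eq j f S hS, map_add, map_sum,
      dD_eq i (dX j f) S (fun J hJ => by rw [dU_dX, hS J hJ, map_zero])]
    congr 1
    refine Finset.sum_congr rfl fun K _ => ?_
    rw [Derivation.leibniz, dD_uc,
      dD_eq i (dU K f) S (fun J hJ => by rw [dU_dU, hS J hJ, map_zero])]
    simp only [smul_eq_mul]
    ring
  rw [key i j, key j i]
  simp only [mul_add, Finset.sum_add_distrib, Finset.mul_sum, dU_dX]
  rw [dX_dX i j]
  have e1 : ∑ K ∈ S, uc (inc i (inc j K)) * dU K f = ∑ K ∈ S, uc (inc j (inc i K)) * dU K f :=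
    Finset.sum_congr rfl fun K _ => by rw [inc_comm]
  have e2 : ∑ x ∈ S, ∑ x_1 ∈ S, uc (inc j x) * (uc (inc i x_1) * dU x_1 (dU x f)) =
      ∑ x ∈ S, ∑ x_1 ∈ S, uc (inc i x) * (uc (inc j x_1) * dU x_1 (dU x f)) := by
    rw [Finset.sum_comm]
    refine Finset.sum_congr rfl fun K _ => Finset.sum_congr rfl fun J _ => ?_
    rw [dU_dU]; ring
  rw [e1, e2]
  ring

/-- The commutator of `∂/∂u_{iJ}` with `d/dx^i` is `∂/∂u_J`. -/
theorem dU_dD_inc (i : Fin N) (J : MI N) (f : Loc N) :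
    dU (inc i J) (dD i f) = dD i (dU (inc i J) f) + dU J f := by
  classical
  obtain ⟨S, hS⟩ := exists_supp f
  rw [dD_eq i f S hS, map_add, map_sum, dU_dX,
    dD_eq i (dU (inc i J) f) S (fun K hK => by rw [dU_dU, hS K hK, map_zero]), add_assoc]
  congr 1
  have : ∀ K, dU (inc i J) (uc (inc i K) * dU K f) = uc (inc i K) * dU K (dU (inc i J) f) +
      if J = K then dU K f else 0 := by
    intro K
    rw [Derivation.leibniz, dU_uc, dU_dU]
    simp only [(inc_injective i).eq_iff, smul_eq_mul]
    split_ifs <;> ring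
  simp only [this, Finset.sum_add_distrib]
  congr 1
  rw [Finset.sum_ite_eq]
  split_ifs with h
  · rfl
  · exact (hS J h).symm

theorem dU_dD_of_zero (i : Fin N) (J : MI N) (hJ : J i = 0) (f : Loc N) :
    dU J (dD i f) = dD i (dU J f) := by
  obtain ⟨S, hS⟩ := exists_supp f
  rw [dD_eq i f S hS, map_add, map_sum, dU_dX,
    dD_eq i (dU J f) S (fun K hK => by rw [dU_dU, hS K hK, map_zero])]
  congr 1
  refine Finset.sum_congr rfl fun K _ => ?_
  have : J ≠ inc i K := by
    rintro rfl
    simp [inc] at hJ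
  rw [Derivation.leibniz, dU_uc, dU_dU, if_neg this]
  simp

end JetBundle

/-! ### Iterated derivatives -/

namespace JetBundle
variable {N : ℕ}

/-- A commuting family in a monoid factors through a commutative monoid. -/
theorem exists_commMonoid {M ι : Type} [Monoid M] (f : ι → M) (hf : ∀ i j, f i * f j = f j * f i) :
    ∃ (M' : Type) (_ : CommMonoid M') (φ : M' →* M) (g : ι → M'), ∀ i, φ (g i) = f i := by
  have hc : ∀ a ∈ Set.range f, ∀ b ∈ Set.range f, a * b = b * a := by
    rintro _ ⟨i, rfl⟩ _ ⟨j, rfl⟩; exact hf i j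
  have := Submonoid.isMulCommutative_closure M hc
  let _ : CommMonoid (Submonoid.closure (Set.range f)) :=
    { mul_comm := fun a b => mul_comm' a b }
  exact ⟨Submonoid.closure (Set.range f), inferInstance, (Submonoid.closure (Set.range f)).subtype,
    fun i => ⟨f i, Submonoid.subset_closure ⟨i, rfl⟩⟩, fun i => rfl⟩

theorem listProd_finsupp {M ι : Type} [Monoid M] (f : ι → M) (hf : ∀ i j, f i * f j = f j * f i)
    (α : ι →₀ ℕ) (j : ι) :
    ((α + Finsupp.single j 1).support.toList.map fun i =>
        f i ^ (α + Finsupp.single j 1 : ι →₀ ℕ) i).prod =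
      f j * (α.support.toList.map fun i => f i ^ α i).prod ∧
    f j * (α.support.toList.map fun i => f i ^ α i).prod =
      (α.support.toList.map fun i => f i ^ α i).prod * f j := by
  obtain ⟨M', _, φ, g, hg⟩ := exists_commMonoid f hf
  have key : ∀ α : ι →₀ ℕ, (α.support.toList.map fun i => f i ^ α i).prod =
      φ (α.prod fun i k => g i ^ k) := by
    intro α
    rw [Finsupp.prod, ← Finset.prod_map_toList, map_list_prod, List.map_map]
    congr 2
    ext i
    simp [hg]
  rw [key, key, Finsupp.prod_add_index' (by simp) (by intros; rw [pow_add]), ← hg, ← map_mul,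
    ← map_mul]
  simp [mul_comm]

theorem inc_apply (i : Fin N) (K : MI N) (k : Fin N) : inc i K k = K k + if k = i then 1 else 0 := by
  simp only [inc, Function.update_apply]
  split_ifs with h <;> simp [h]

/-- Raising one exponent in an ordered product of powers of commuting elements multiplies the
product by the corresponding element. -/
theorem listProd_inc {M : Type} [Monoid M] (f : Fin N → M) (hf : ∀ i j, f i * f j = f j * f i)
    (K : MI N) (j : Fin N) :
    ((List.finRange N).map fun i => f i ^ (inc j K) i).prod =
      f j * ((List.finRange N).map fun i => f i ^ K i).prod ∧
    f j * ((List.finRange N).map fun i => f i ^ K i).prod =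
      ((List.finRange N).map fun i => f i ^ K i).prod * f j := by
  obtain ⟨M', _, φ, g, hg⟩ := exists_commMonoid f hf
  have key : ∀ K : MI N, ((List.finRange N).map fun i => f i ^ K i).prod =
      φ (∏ i, g i ^ K i) := by
    intro α
    rw [Fin.prod_univ_def, map_list_prod, List.map_map]
    congr 2
    ext i
    simp [hg]
  rw [key, key, ← hg, ← map_mul, ← map_mul]
  simp only [inc_apply, pow_add, Finset.prod_mul_distrib]
  simp [mul_comm]

/-- `d/dx^i` as a linear endomorphism. -/
noncomputable def eD (i : Fin N) : Module.End ℝ (Loc N) := (dD i : Loc N →ₗ[ℝ] Loc N)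

/-- `∂/∂u_J` as a linear endomorphism. -/
noncomputable def eU (J : MI N) : Module.End ℝ (Loc N) := (dU J : Loc N →ₗ[ℝ] Loc N)

theorem eD_comm (i j : Fin N) : eD i * eD j = eD j * eD i := by
  ext1 f; exact dD_dD i j f

theorem eU_comm (i j : MI N) : eU i * eU j = eU j * eU i := by
  ext1 f; exact dU_dU i j f

/-- `(d/dx)^K` on local functions. -/
noncomputable def DP (K : MI N) : Module.End ℝ (Loc N) :=
  ((List.finRange N).map fun i => eD i ^ K i).prod

/-- `(∂/∂u)^α` on local functions. -/
noncomputable def UP (α : MI N →₀ ℕ) : Module.End ℝ (Loc N) :=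
  (α.support.toList.map fun J => eU J ^ α J).prod

theorem DP_inc (i : Fin N) (K : MI N) (f : Loc N) : DP (inc i K) f = dD i (DP K f) :=
  LinearMap.congr_fun (listProd_inc eD eD_comm K i).1 f

theorem DP_dD (i : Fin N) (K : MI N) (f : Loc N) : DP K (dD i f) = dD i (DP K f) :=
  (LinearMap.congr_fun (listProd_inc eD eD_comm K i).2 f).symm

theorem UP_add_single (J : MI N) (α : MI N →₀ ℕ) (f : Loc N) :
    UP (α + Finsupp.single J 1) f = dU J (UP α f) :=
  LinearMap.congr_fun (listProd_finsupp eU eU_comm α J).1 f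

theorem UP_dU (J : MI N) (α : MI N →₀ ℕ) (f : Loc N) : UP α (dU J f) = dU J (UP α f) :=
  (LinearMap.congr_fun (listProd_finsupp eU eU_comm α J).2 f).symm

@[simp] theorem DP_zero : DP (0 : MI N) = 1 := by
  simp [DP]

@[simp] theorem UP_zero : UP (0 : MI N →₀ ℕ) = 1 := by
  simp [UP]

theorem coe_DP (K : MI N) (f : Loc N) : (DP K f : Fn N) = DPow K f.1 := by
  have key : ∀ l : List (Fin N), (((l.map fun i => eD i ^ K i).prod f : Loc N) : Fn N) =
      l.foldr (fun i g => (Dtot i)^[K i] ∘ g) id f.1 := by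
    intro l
    induction l with
    | nil => simp
    | cons a l ih =>
      simp only [List.map_cons, List.prod_cons, List.foldr_cons, Function.comp, Module.End.mul_apply]
      rw [← ih]
      generalize (List.map (fun i => eD i ^ K i) l).prod f = g
      induction K a with
      | zero => simp
      | succ k ih => rw [pow_succ', Module.End.mul_apply, Function.iterate_succ_apply', ← ih]; rfl
  exact key _

theorem coe_UP (α : MI N →₀ ℕ) (f : Loc N) : (UP α f : Fn N) = UPow α f.1 := by
  have key : ∀ l : List (MI N), (((l.map fun i => eU i ^ α i).prod f : Loc N) : Fn N) =
      l.foldr (fun i g => (pderivU i)^[α i] ∘ g) id f.1 := by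
    intro l
    induction l with
    | nil => simp
    | cons a l ih =>
      simp only [List.map_cons, List.prod_cons, List.foldr_cons, Function.comp, Module.End.mul_apply]
      rw [← ih]
      generalize (List.map (fun i => eU i ^ α i) l).prod f = g
      induction α a with
      | zero => simp
      | succ k ih => rw [pow_succ', Module.End.mul_apply, Function.iterate_succ_apply', ← ih]; rfl
  exact key _

theorem MI_induct {P : MI N → Prop} (h0 : P 0) (hs : ∀ i K, P K → P (inc i K)) (K : MI N) : P K := by
  suffices ∀ d : ℕ, ∀ K : MI N, ∑ i, K i = d → P K from this _ K rfl
  intro d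
  induction d with
  | zero =>
    intro K hK
    have : K = 0 := by
      ext i
      simpa using (Finset.sum_eq_zero_iff.1 hK) i (Finset.mem_univ i)
    rwa [this]
  | succ d ih =>
    intro K hK
    obtain ⟨i, hi⟩ : ∃ i, K i ≠ 0 := by
      by_contra! h
      simp [h] at hK
    have e : K = inc i (Function.update K i (K i - 1)) := by
      ext k
      simp only [inc, Function.update_apply]
      split_ifs with h
      · subst h; omega
      · rfl
    rw [e]
    apply hs
    apply ih
    have : ∑ k, K k = ∑ k, Function.update K i (K i - 1) k + 1 := by
      conv_lhs => rw [e]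
      simp only [inc_apply, Finset.sum_add_distrib]
      simp
    omega

theorem finsupp_induct {P : (MI N →₀ ℕ) → Prop} (h0 : P 0)
    (hs : ∀ J α, P α → P (α + Finsupp.single J 1)) (α : MI N →₀ ℕ) : P α := by
  suffices ∀ β : MI N →₀ ℕ, ∀ α, P α → P (α + β) by simpa using this α 0 h0
  intro β
  induction β using Finsupp.induction_linear with
  | zero => simp
  | add f g hf hg => intro α h; rw [← add_assoc]; exact hg _ (hf _ h)
  | single J k =>
    induction k with
    | zero => simp
    | succ k ih =>
      intro α h
      rw [Finsupp.single_add, ← add_assoc]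
      exact hs _ _ (ih _ h)

theorem degf_add_single (J : MI N) (α : MI N →₀ ℕ) :
    degf (α + Finsupp.single J 1) = max (∑ i, J i) (degf α) := by
  classical
  have : (α + Finsupp.single J 1).support = insert J α.support := by
    ext K
    simp only [Finsupp.mem_support_iff, Finsupp.add_apply, Finset.mem_insert,
      Finsupp.single_apply]
    by_cases h : J = K
    · simp [h]
    · simp [h, Ne.symm h]
  rw [degf, this, Finset.sup_insert]
  rfl

/-- A local function is killed by `(∂/∂u)^α` once `α` involves jets of high enough order. -/
theorem exists_level (f : Loc N) : ∃ m : ℕ, ∀ α : MI N →₀ ℕ, m < degf α → UP α f = 0 := by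
  obtain ⟨S, hS⟩ := exists_supp f
  refine ⟨S.sup fun J => ∑ i, J i, fun α hα => ?_⟩
  rw [degf, Finset.lt_sup_iff] at hα
  obtain ⟨J, hJ, hlt⟩ := hα
  have hJS : J ∉ S := fun h => absurd (Finset.le_sup (f := fun J : MI N => ∑ i, J i) h) (by omega)
  have : α = (α - Finsupp.single J 1) + Finsupp.single J 1 := by
    rw [tsub_add_cancel_of_le]
    rw [Finsupp.single_le_iff]
    have := Finsupp.mem_support_iff.1 hJ
    omega
  rw [this, UP_add_single, ← UP_dU, hS J hJS, map_zero]

/-- Commuting `(∂/∂u)^α` past `d/dx^i` only produces terms `(∂/∂u)^β` whose jet order has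
dropped by at most one. -/
theorem UP_eD (i : Fin N) (α : MI N →₀ ℕ) :
    UP α * eD i - eD i * UP α ∈ Submodule.span ℝ (UP '' {β : MI N →₀ ℕ | degf α ≤ degf β + 1}) := by
  induction α using finsupp_induct with
  | h0 =>
    have : UP 0 * eD i - eD i * UP 0 = (0 : Module.End ℝ (Loc N)) := by
      ext1 f
      change UP 0 (dD i f) - dD i (UP 0 f) = 0
      simp
    rw [this]; exact Submodule.zero_mem _
  | hs J α ih =>
    have e : UP (α + Finsupp.single J 1) = eU J * UP α := by ext1 f; exact UP_add_single J α f
    have h1 : eU J * (UP α * eD i - eD i * UP α) ∈ Submodule.span ℝ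
        (UP '' {β : MI N →₀ ℕ | degf (α + Finsupp.single J 1) ≤ degf β + 1}) := by
      refine Submodule.span_induction (p := fun A _ => eU J * A ∈ Submodule.span ℝ
        (UP '' {β : MI N →₀ ℕ | degf (α + Finsupp.single J 1) ≤ degf β + 1})) ?_ ?_ ?_ ?_ ih
      · rintro _ ⟨β, hβ, rfl⟩
        apply Submodule.subset_span
        refine ⟨β + Finsupp.single J 1, ?_, ?_⟩
        · simp only [Set.mem_ofPred_eq, degf_add_single] at hβ ⊢
          omega
        · ext1 f; exact UP_add_single J β f
      · simp
      · intro a b _ _ ha hb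
        rw [mul_add]; exact add_mem ha hb
      · intro c a _ ha
        rw [mul_smul_comm]; exact Submodule.smul_mem _ _ ha
    by_cases hJ : J i = 0
    · have : UP (α + Finsupp.single J 1) * eD i - eD i * UP (α + Finsupp.single J 1) =
          eU J * (UP α * eD i - eD i * UP α) := by
        ext1 f
        change UP (α + Finsupp.single J 1) (dD i f) - dD i (UP (α + Finsupp.single J 1) f) =
          dU J (UP α (dD i f) - dD i (UP α f))
        rw [UP_add_single, UP_add_single, map_sub, dU_dD_of_zero i J hJ]
      rw [this]; exact h1
    · obtain ⟨J', rfl⟩ : ∃ J', J = inc i J' := by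
        refine ⟨Function.update J i (J i - 1), ?_⟩
        ext k
        simp only [inc, Function.update_apply]
        split_ifs with h
        · subst h; omega
        · rfl
      have : UP (α + Finsupp.single (inc i J') 1) * eD i - eD i * UP (α + Finsupp.single (inc i J') 1)
          = eU (inc i J') * (UP α * eD i - eD i * UP α) + UP (α + Finsupp.single J' 1) := by
        ext1 f
        change UP (α + Finsupp.single (inc i J') 1) (dD i f) -
          dD i (UP (α + Finsupp.single (inc i J') 1) f) =
          dU (inc i J') (UP α (dD i f) - dD i (UP α f)) + UP (α + Finsupp.single J' 1) f
        rw [UP_add_single, UP_add_single, UP_add_single, map_sub, dU_dD_inc]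
        abel
      rw [this]
      refine add_mem h1 (Submodule.subset_span ⟨_, ?_, rfl⟩)
      simp only [Set.mem_ofPred_eq, degf_add_single, inc_apply, Finset.sum_add_distrib]
      simp
      omega

end JetBundle

/-! ### Left and right coefficients of polarized operators -/

set_option linter.unusedSectionVars false

namespace JetBundle
open Filter

/-- `n`-ary operators on local functions. -/
abbrev LOp (N n : ℕ) := (Fin n → Loc N) → Loc N

section Terms
variable {N n : ℕ} [NeZero n]

/-- The `j`-th factor of the product attached to the index `a` in polarized form. -/
noncomputable def fac (a : Idx N n) (f : Fin n → Loc N) (j : Fin n) : Loc N :=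
  if j = (0 : Fin n) then UP (a.2 j) (f j) else DP (a.1 j) (UP (a.2 j) (f j))

/-- The product `(∂/∂u)^{α_1} f_1 · Π_{j≥2} (d/dx)^{I_j} (∂/∂u)^{α_j} f_j`; it does not involve
`I_1`. -/
noncomputable def PP (a : Idx N n) (f : Fin n → Loc N) : Loc N := ∏ j, fac a f j

/-- Left-coefficient term `c · (d/dx)^{I_1} (P_a f)`. -/
noncomputable def TL (a : Idx N n) (f : Fin n → Loc N) : Loc N →ₗ[ℝ] Loc N :=
  LinearMap.mulRight ℝ (DP (a.1 0) (PP a f))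

/-- Right-coefficient term `(d/dx)^{I_1} (c · P_a f)`. -/
noncomputable def TR (a : Idx N n) (f : Fin n → Loc N) : Loc N →ₗ[ℝ] Loc N :=
  DP (a.1 0) ∘ₗ LinearMap.mulRight ℝ (PP a f)

theorem TL_apply (a : Idx N n) (f : Fin n → Loc N) (c : Loc N) :
    TL a f c = c * DP (a.1 0) (PP a f) := rfl

theorem TR_apply (a : Idx N n) (f : Fin n → Loc N) (c : Loc N) :
    TR a f c = DP (a.1 0) (c * PP a f) := rfl

/-- The total jet order of the vertical exponents of an index. -/
def dg (a : Idx N n) : ℕ := ∑ j, degf (a.2 j)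

theorem exists_level_PP (f : Fin n → Loc N) : ∃ m, ∀ a : Idx N n, m < dg a → PP a f = 0 := by
  choose m hm using fun j => exists_level (f j)
  refine ⟨∑ j, m j, fun a ha => ?_⟩
  obtain ⟨j, -, hj⟩ := Finset.exists_lt_of_sum_lt ha
  refine Finset.prod_eq_zero (Finset.mem_univ j) ?_
  simp only [fac, hm j _ hj, map_zero, ite_self]

/-- Terms vanish at indices of high jet order. -/
def LevelBdd (T : Idx N n → (Fin n → Loc N) → (Loc N →ₗ[ℝ] Loc N)) : Prop :=
  ∀ f, ∃ m, ∀ a, m < dg a → T a f = 0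

theorem levelBdd_TL : LevelBdd (TL (N := N) (n := n)) := fun f => by
  obtain ⟨m, hm⟩ := exists_level_PP f
  refine ⟨m, fun a ha => ?_⟩
  ext1 c
  simp [TL_apply, hm a ha]

theorem levelBdd_TR : LevelBdd (TR (N := N) (n := n)) := fun f => by
  obtain ⟨m, hm⟩ := exists_level_PP f
  refine ⟨m, fun a ha => ?_⟩
  ext1 c
  simp [TR_apply, hm a ha]

/-- The finiteness condition on coefficient data. -/
def GoodL (r : Idx N n → Loc N) : Prop := ∀ m : ℕ, {a | r a ≠ 0 ∧ dg a ≤ m}.Finite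

/-- `A` is the locally finite sum of the terms `T` with coefficients `r`. -/
def PresT (T : Idx N n → (Fin n → Loc N) → (Loc N →ₗ[ℝ] Loc N)) (r : Idx N n → Loc N)
    (A : LOp N n) : Prop :=
  ∀ f, ∀ᶠ S : Finset (Idx N n) in atTop, A f = ∑ a ∈ S, T a f (r a)

theorem exists_presT {T : Idx N n → (Fin n → Loc N) → (Loc N →ₗ[ℝ] Loc N)} (hT : LevelBdd T)
    {r : Idx N n → Loc N} (hr : GoodL r) (f : Fin n → Loc N) :
    ∃ S0 : Finset (Idx N n), ∀ a ∉ S0, T a f (r a) = 0 := by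
  obtain ⟨m, hm⟩ := hT f
  refine ⟨(hr m).toFinset, fun a ha => ?_⟩
  by_cases h : m < dg a
  · rw [hm a h]; rfl
  · have : r a = 0 := by
      by_contra h0
      exact ha ((hr m).mem_toFinset.2 ⟨h0, by omega⟩)
    rw [this, map_zero]

/-- Rewriting each term of a locally finite sum as a finite combination of terms of another kind
yields again a locally finite sum, provided the rewriting does not lower the jet order by more
than a bounded amount. -/
theorem assemble {T : Idx N n → (Fin n → Loc N) → (Loc N →ₗ[ℝ] Loc N)} (hT : LevelBdd T)
    {q : Idx N n → Loc N} (hq : GoodL q) (s : Idx N n → (Idx N n →₀ Loc N)) (k : ℕ)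
    (hs0 : ∀ a, q a = 0 → s a = 0) (hdeg : ∀ a b, s a b ≠ 0 → dg a ≤ dg b + k)
    {A : LOp N n}
    (hA : ∀ f, ∀ᶠ S : Finset (Idx N n) in atTop, A f = ∑ a ∈ S, (s a).sum fun b c => T b f c) :
    GoodL (fun b => ∑ᶠ a, s a b) ∧ PresT T (fun b => ∑ᶠ a, s a b) A := by
  classical
  have hmem : ∀ m a b, s a b ≠ 0 → dg b ≤ m → a ∈ (hq (m + k)).toFinset := by
    intro m a b hab hb
    refine (hq (m + k)).mem_toFinset.2 ⟨fun h => hab (by rw [hs0 a h]; rfl), ?_⟩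
    have := hdeg a b hab
    omega
  have hfin : ∀ m b, dg b ≤ m → ∑ᶠ a, s a b = ∑ a ∈ (hq (m + k)).toFinset, s a b := by
    intro m b hb
    exact finsum_eq_sum_of_support_subset _ fun a ha => hmem m a b ha hb
  constructor
  · intro m
    refine Set.Finite.subset (((hq (m + k)).toFinset.biUnion fun a => (s a).support).finite_toSet) ?_
    rintro b ⟨hb, hbm⟩
    simp only at hb
    rw [hfin m b hbm] at hb
    obtain ⟨a, ha, hab⟩ := Finset.exists_ne_zero_of_sum_ne_zero hb
    rw [Finset.mem_coe, Finset.mem_biUnion]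
    exact ⟨a, ha, by simpa using hab⟩
  · intro f
    obtain ⟨m, hm⟩ := hT f
    have h1 := (hA f).and (eventually_ge_atTop (hq (m + k)).toFinset)
    obtain ⟨S, hS, hS'⟩ := h1.exists
    refine (eventually_ge_atTop ((hq (m + k)).toFinset.biUnion fun a => (s a).support)).mono ?_
    intro S' hSS'
    rw [hS]
    have e1 : ∑ a ∈ S, (s a).sum (fun b c => T b f c) =
        ∑ a ∈ (hq (m + k)).toFinset, (s a).sum fun b c => T b f c := by
      symm
      refine Finset.sum_subset hS' fun a _ ha => ?_
      refine Finset.sum_eq_zero fun b hb => ?_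
      by_cases hbm : m < dg b
      · show T b f (s a b) = 0
        rw [hm b hbm]; rfl
      · exact absurd (hmem m a b (by simpa using hb) (by omega)) ha
    have e2 : ∀ b, T b f (∑ᶠ a, s a b) = ∑ a ∈ (hq (m + k)).toFinset, T b f (s a b) := by
      intro b
      by_cases hbm : m < dg b
      · simp [hm b hbm]
      · rw [hfin m b (by omega), map_sum]
    rw [e1, Finset.sum_congr rfl fun b _ => e2 b, Finset.sum_comm]
    refine Finset.sum_congr rfl fun a ha => ?_
    refine Finsupp.sum_of_support_subset _ ?_ _ (by simp)
    exact fun b hb => hSS' (Finset.mem_biUnion.2 ⟨a, ha, hb⟩)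

/-- Replace the multi-index `I_1` of an index. -/
def setK (a : Idx N n) (K : MI N) : Idx N n := (Function.update a.1 0 K, a.2)

@[simp] theorem setK_fst_zero (a : Idx N n) (K : MI N) : (setK a K).1 0 = K := by simp [setK]
@[simp] theorem setK_snd (a : Idx N n) (K : MI N) : (setK a K).2 = a.2 := rfl
@[simp] theorem setK_setK (a : Idx N n) (K K' : MI N) : setK (setK a K) K' = setK a K' := by
  simp [setK]
@[simp] theorem setK_self (a : Idx N n) : setK a (a.1 0) = a := by simp [setK]
@[simp] theorem dg_setK (a : Idx N n) (K : MI N) : dg (setK a K) = dg a := rfl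
@[simp] theorem PP_setK (a : Idx N n) (K : MI N) (f : Fin n → Loc N) : PP (setK a K) f = PP a f := by
  refine Finset.prod_congr rfl fun j _ => ?_
  unfold fac
  split_ifs with h
  · rfl
  · simp [setK, h]

theorem setK_injective (a : Idx N n) : Function.Injective (setK a) := fun K K' h => by
  simpa using congrArg (fun b : Idx N n => b.1 0) h

end Terms

section Conversion
variable {N : ℕ}

theorem zero_notMem_range_inc (i : Fin N) : (0 : MI N) ∉ Set.range (inc i) := by
  rintro ⟨K, hK⟩
  have := congrFun hK i
  simp [inc] at this

theorem sum_inc (i : Fin N) (K : MI N) : ∑ k, inc i K k = ∑ k, K k + 1 := by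
  simp [inc_apply, Finset.sum_add_distrib]

/-- Moving a coefficient from the left of `(d/dx)^K` to its right. The constant term of the result
is the formal adjoint of `(d/dx)^K` applied to the coefficient. -/
theorem left_to_right (K : MI N) (c : Loc N) : ∃ s : MI N →₀ Loc N,
    s 0 = (-1 : ℝ) ^ (∑ i, K i) • DP K c ∧
    ∀ P, c * DP K P = s.sum fun K' c' => DP K' (c' * P) := by
  induction K using MI_induct generalizing c with
  | h0 => exact ⟨Finsupp.single 0 c, by simp, fun P => by simp⟩
  | hs i K ih =>
    obtain ⟨s, hs, hsP⟩ := ih c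
    obtain ⟨t, ht, htP⟩ := ih (dD i c)
    refine ⟨Finsupp.mapDomain (inc i) s - t, ?_, fun P => ?_⟩
    · rw [Finsupp.sub_apply, Finsupp.mapDomain_of_notMem_range _ _ (zero_notMem_range_inc i), ht,
        sum_inc, DP_inc, DP_dD, pow_succ]
      simp
    · have h1 : c * DP (inc i K) P = dD i (c * DP K P) - dD i c * DP K P := by
        rw [DP_inc, Derivation.leibniz]
        simp only [smul_eq_mul]; ring
      rw [h1, hsP, htP, Finsupp.sum_sub_index (by intros; simp [sub_mul]),
        Finsupp.sum_mapDomain_index (by simp) (by intros; simp [add_mul])]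
      congr 1
      rw [Finsupp.sum, map_sum]
      exact Finset.sum_congr rfl fun K' _ => (DP_inc _ _ _).symm

/-- Moving a coefficient from the right of `(d/dx)^K` to its left. -/
theorem right_to_left (K : MI N) (c : Loc N) : ∃ s : MI N →₀ Loc N,
    ∀ P, DP K (c * P) = s.sum fun K' c' => c' * DP K' P := by
  induction K using MI_induct generalizing c with
  | h0 => exact ⟨Finsupp.single 0 c, fun P => by simp⟩
  | hs i K ih =>
    obtain ⟨s, hsP⟩ := ih c
    refine ⟨Finsupp.mapDomain (inc i) s + s.mapRange (dD i) (map_zero _), fun P => ?_⟩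
    rw [DP_inc, hsP, Finsupp.sum_add_index' (by simp) (by intros; simp [add_mul]),
      Finsupp.sum_mapDomain_index (by simp) (by intros; simp [add_mul]),
      Finsupp.sum_mapRange_index (by simp), Finsupp.sum, Finsupp.sum, Finsupp.sum, map_sum,
      ← Finset.sum_add_distrib]
    refine Finset.sum_congr rfl fun K' _ => ?_
    rw [Derivation.leibniz, DP_inc]
    simp only [smul_eq_mul]; ring

end Conversion

section Presentations
variable {N n : ℕ} [NeZero n]

open Classical in
/-- Conversion between left and right coefficients of whole presentations. -/
theorem presT_convert {T T' : Idx N n → (Fin n → Loc N) → (Loc N →ₗ[ℝ] Loc N)} (hT' : LevelBdd T')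
    {q : Idx N n → Loc N} (hq : GoodL q) {A : LOp N n} (hA : PresT T q A)
    (s : Idx N n → (MI N →₀ Loc N))
    (hs : ∀ a f, T a f (q a) = (s a).sum fun K c => T' (setK a K) f c) :
    ∃ r, GoodL r ∧ PresT T' r A ∧
      ∀ b, b.1 0 = 0 → r b = ∑ᶠ K, if q (setK b K) = 0 then 0 else s (setK b K) 0 := by
  classical
  let s' : Idx N n → (Idx N n →₀ Loc N) := fun a =>
    if q a = 0 then 0 else Finsupp.mapDomain (setK a) (s a)
  have hr : ∀ a b, s' a b ≠ 0 → setK b (a.1 0) = a ∧ b ∈ Set.range (setK a) := by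
    intro a b hab
    simp only [s'] at hab
    split_ifs at hab with h
    · simp at hab
    · have hb : b ∈ Set.range (setK a) := by
        by_contra hb
        exact hab (Finsupp.mapDomain_of_notMem_range _ _ hb)
      obtain ⟨K, rfl⟩ := hb
      simp
  obtain ⟨h1, h2⟩ := assemble hT' hq s' 0 (fun a ha => by simp [s', ha]) (fun a b hab => by
    obtain ⟨-, K, rfl⟩ := hr a b hab
    simp) (A := A) (fun f => (hA f).mono fun S hS => by
      rw [hS]
      refine Finset.sum_congr rfl fun a _ => ?_
      simp only [s']
      split_ifs with h
      · simp [h]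
      · rw [hs, Finsupp.sum_mapDomain_index (by simp) (by simp)])
  refine ⟨_, h1, h2, fun b hb => ?_⟩
  have hsub : (Function.support fun a => s' a b) ⊆ Set.range (setK b) := by
    intro a ha
    exact ⟨a.1 0, (hr a b ha).1⟩
  rw [← finsum_mem_univ, ← finsum_mem_inter_support, Set.univ_inter,
    ← Set.inter_eq_right.2 hsub, finsum_mem_inter_support, finsum_mem_range (setK_injective b)]
  refine finsum_congr fun K => ?_
  simp only [s']
  split_ifs with h
  · rfl
  · conv_lhs => rw [show b = setK (setK b K) 0 by rw [setK_setK, ← hb, setK_self]]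
    rw [setK_setK, setK_setK]
    have := Finsupp.mapDomain_apply (setK_injective (setK b K)) (s (setK b K)) 0
    simpa using this

theorem presT_left_to_right {q : Idx N n → Loc N} (hq : GoodL q) {A : LOp N n}
    (hA : PresT TL q A) : ∃ r, GoodL r ∧ PresT TR r A ∧
      ∀ b, b.1 0 = 0 → r b = ∑ᶠ K, (-1 : ℝ) ^ (∑ i, K i) • DP K (q (setK b K)) := by
  choose s hs0 hs using fun a : Idx N n => left_to_right (a.1 0) (q a)
  obtain ⟨r, h1, h2, h3⟩ := presT_convert (T' := TR) levelBdd_TR hq hA s (fun a f => by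
    rw [TL_apply, hs]
    simp [TR_apply])
  refine ⟨r, h1, h2, fun b hb => ?_⟩
  rw [h3 b hb]
  refine finsum_congr fun K => ?_
  split_ifs with h
  · simp [h]
  · rw [hs0]; simp

theorem presT_right_to_left {r : Idx N n → Loc N} (hr : GoodL r) {A : LOp N n}
    (hA : PresT TR r A) : ∃ q, GoodL q ∧ PresT TL q A := by
  choose s hs using fun a : Idx N n => right_to_left (a.1 0) (r a)
  obtain ⟨q, h1, h2, -⟩ := presT_convert (T' := TL) levelBdd_TL hr hA s (fun a f => by
    rw [TR_apply, hs]
    simp [TL_apply])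
  exact ⟨q, h1, h2⟩

end Presentations
end JetBundle

/-! ### Composition of operators with total derivatives -/

namespace JetBundle
open Filter

section Submodules
variable {N n : ℕ} [NeZero n]

theorem GoodL.add {r s : Idx N n → Loc N} (hr : GoodL r) (hs : GoodL s) : GoodL (r + s) := by
  intro m
  refine ((hr m).union (hs m)).subset ?_
  rintro a ⟨h, hm⟩
  by_cases h0 : r a = 0
  · exact Or.inr ⟨fun h1 => h (by simp [h0, h1]), hm⟩
  · exact Or.inl ⟨h0, hm⟩

theorem GoodL.smul {r : Idx N n → Loc N} (hr : GoodL r) (c : ℝ) : GoodL (c • r) := by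
  intro m
  refine (hr m).subset ?_
  rintro a ⟨h, hm⟩
  exact ⟨fun h1 => h (by simp [h1]), hm⟩

theorem GoodL.zero : GoodL (0 : Idx N n → Loc N) := fun m => by simp

theorem PresT.add {T : Idx N n → (Fin n → Loc N) → (Loc N →ₗ[ℝ] Loc N)} {r s : Idx N n → Loc N}
    {A B : LOp N n} (hA : PresT T r A) (hB : PresT T s B) : PresT T (r + s) (A + B) := fun f =>
  ((hA f).and (hB f)).mono fun S hS => by
    simp only [Pi.add_apply, map_add, Finset.sum_add_distrib, hS.1, hS.2]

theorem PresT.smul {T : Idx N n → (Fin n → Loc N) → (Loc N →ₗ[ℝ] Loc N)} {r : Idx N n → Loc N}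
    {A : LOp N n} (hA : PresT T r A) (c : ℝ) : PresT T (c • r) (c • A) := fun f =>
  (hA f).mono fun S hS => by
    simp only [Pi.smul_apply, map_smul, ← Finset.smul_sum, hS]

theorem PresT.zero {T : Idx N n → (Fin n → Loc N) → (Loc N →ₗ[ℝ] Loc N)} :
    PresT T (0 : Idx N n → Loc N) (0 : LOp N n) := fun f =>
  Eventually.of_forall fun S => by simp

variable (N n) in
/-- The multilinear local differential operators, described by right coefficients. -/
def IsR : Submodule ℝ (LOp N n) where
  carrier := {A | ∃ r, GoodL r ∧ PresT TR r A}
  add_mem' := by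
    rintro A B ⟨r, h1, h2⟩ ⟨s, h3, h4⟩
    exact ⟨r + s, h1.add h3, h2.add h4⟩
  zero_mem' := ⟨0, GoodL.zero, PresT.zero⟩
  smul_mem' := by
    rintro c A ⟨r, h1, h2⟩
    exact ⟨c • r, h1.smul c, h2.smul c⟩

variable (N n) in
/-- The operators whose characteristic vanishes: those with a right-coefficient presentation
having no terms with `I_1 = 0`. -/
def RChi : Submodule ℝ (LOp N n) where
  carrier := {A | ∃ r, GoodL r ∧ PresT TR r A ∧ ∀ a, a.1 0 = 0 → r a = 0}
  add_mem' := by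
    rintro A B ⟨r, h1, h2, h⟩ ⟨s, h3, h4, h'⟩
    exact ⟨r + s, h1.add h3, h2.add h4, fun a ha => by simp [h a ha, h' a ha]⟩
  zero_mem' := ⟨0, GoodL.zero, PresT.zero, fun a ha => rfl⟩
  smul_mem' := by
    rintro c A ⟨r, h1, h2, h⟩
    exact ⟨c • r, h1.smul c, h2.smul c, fun a ha => by simp [h a ha]⟩

theorem RChi_le : RChi N n ≤ IsR N n := by
  rintro A ⟨r, h1, h2, -⟩
  exact ⟨r, h1, h2⟩

/-- Raise the multi-index `I_1` in direction `i`. -/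
def up (i : Fin N) (a : Idx N n) : Idx N n := setK a (inc i (a.1 0))

theorem TR_up (i : Fin N) (a : Idx N n) (f : Fin n → Loc N) (c : Loc N) :
    TR (up i a) f c = dD i (TR a f c) := by
  simp [TR_apply, up, DP_inc]

/-- The right coefficients of `d/dx^i ∘ A` are those of `A`, shifted in `I_1`. -/
theorem presT_post (i : Fin N) {r : Idx N n → Loc N} (hr : GoodL r) {A : LOp N n}
    (hA : PresT TR r A) :
    GoodL (fun b => ∑ᶠ a, Finsupp.single (up i a) (r a) b) ∧
    PresT TR (fun b => ∑ᶠ a, Finsupp.single (up i a) (r a) b) fun f => dD i (A f) := by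
  classical
  refine assemble levelBdd_TR hr (fun a => Finsupp.single (up i a) (r a)) 0
    (fun a h => by simp [h]) (fun a b hab => ?_) (fun f => (hA f).mono fun S hS => ?_)
  · have : up i a = b := by
      by_contra h
      exact hab (by simp [h])
    rw [← this]; simp [up]
  · rw [hS, map_sum]
    refine Finset.sum_congr rfl fun a _ => ?_
    rw [Finsupp.sum_single_index (h := fun b c => TR b f c) (map_zero _), TR_up]

/-- The characteristic of `d/dx^i ∘ A` vanishes, since its right coefficients have `I_1 ≠ 0`. -/
theorem RChi_dD (i : Fin N) {A : LOp N n} (hA : A ∈ IsR N n) : (fun f => dD i (A f)) ∈ RChi N n := by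
  classical
  obtain ⟨r, h1, h2⟩ := hA
  obtain ⟨h3, h4⟩ := presT_post i h1 h2
  refine ⟨_, h3, h4, fun b hb => ?_⟩
  refine (finsum_congr fun a => ?_).trans finsum_zero
  rw [Finsupp.single_apply, if_neg]
  rintro rfl
  refine zero_notMem_range_inc i ⟨a.1 0, ?_⟩
  simpa [up] using hb

end Submodules

section Precomposition
variable {N n : ℕ} [NeZero n]

/-- Finite combinations of right-coefficient terms of jet order at least `d - 1`. -/
def W (N n d : ℕ) [NeZero n] : Submodule ℝ (LOp N n) :=
  Submodule.span ℝ {B | ∃ b c, d ≤ dg b + 1 ∧ B = fun f => TR b f c}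

theorem TR_mem_W {d : ℕ} (b : Idx N n) (c : Loc N) (h : d ≤ dg b + 1) :
    (fun f => TR b f c) ∈ W N n d := Submodule.subset_span ⟨b, c, h, rfl⟩

/-- Elements of `W N n d` have finitely many right coefficients, all of jet order at least
`d - 1`. -/
theorem exists_of_mem_W {d : ℕ} {B : LOp N n} (hB : B ∈ W N n d) : ∃ s : Idx N n →₀ Loc N,
    (∀ b, s b ≠ 0 → d ≤ dg b + 1) ∧ ∀ f, B f = s.sum fun b c => TR b f c := by
  classical
  induction hB using Submodule.span_induction with
  | mem B h =>
    obtain ⟨b, c, h, rfl⟩ := h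
    refine ⟨Finsupp.single b c, fun b' hb' => ?_, fun f => ?_⟩
    · have : b = b' := by
        by_contra h
        exact hb' (by simp [h])
      rwa [← this]
    · rw [Finsupp.sum_single_index (h := fun b c => TR b f c) (map_zero _)]
  | zero => exact ⟨0, by simp, fun f => by simp⟩
  | add A B _ _ hA hB =>
    obtain ⟨s, h1, h2⟩ := hA
    obtain ⟨t, h3, h4⟩ := hB
    refine ⟨s + t, fun b hb => ?_, fun f => ?_⟩
    · by_cases h : s b = 0
      · exact h3 b fun h' => hb (by simp [h, h'])
      · exact h1 b h
    · rw [Finsupp.sum_add_index' (fun _ => map_zero _) (fun _ => map_add _), ← h2, ← h4]; rfl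
  | smul x A _ hA =>
    obtain ⟨s, h1, h2⟩ := hA
    refine ⟨x • s, fun b hb => h1 b fun h => hb (by simp [h]), fun f => ?_⟩
    rw [Finsupp.sum_smul_index' (fun _ => map_zero _)]
    simp only [map_smul, ← Finsupp.smul_sum, ← h2]
    rfl

/-- Replace `I_j`. -/
def setI (a : Idx N n) (j : Fin n) (K : MI N) : Idx N n := (Function.update a.1 j K, a.2)
/-- Replace `α_j`. -/
def setA (a : Idx N n) (j : Fin n) (β : MI N →₀ ℕ) : Idx N n := (a.1, Function.update a.2 j β)

/-- The `j`-th factor with `(∂/∂u)^{α_j}` replaced by an arbitrary operator. -/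
noncomputable def opj (a : Idx N n) (j : Fin n) (X : Module.End ℝ (Loc N)) (x : Loc N) : Loc N :=
  if j = (0 : Fin n) then X x else DP (a.1 j) (X x)

/-- A right-coefficient term with `(∂/∂u)^{α_j}` replaced by an arbitrary operator. -/
noncomputable def Phi (a : Idx N n) (c : Loc N) (j : Fin n) :
    Module.End ℝ (Loc N) →ₗ[ℝ] LOp N n where
  toFun X f := DP (a.1 0) (c * (opj a j X (f j) * ∏ l ∈ Finset.univ.erase j, fac a f l))
  map_add' X Y := by
    ext1 f
    have : opj a j (X + Y) (f j) = opj a j X (f j) + opj a j Y (f j) := by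
      unfold opj
      split_ifs
      · rfl
      · rw [← map_add]; rfl
    simp only [this, Pi.add_apply, add_mul, mul_add, map_add]
  map_smul' x X := by
    ext1 f
    have : opj a j (x • X) (f j) = x • opj a j X (f j) := by
      unfold opj
      split_ifs
      · rfl
      · rw [← map_smul]; rfl
    simp only [this, Pi.smul_apply, smul_mul_assoc, mul_smul_comm, map_smul, RingHom.id_apply]

theorem PP_split (a : Idx N n) (f : Fin n → Loc N) (j : Fin n) :
    PP a f = fac a f j * ∏ l ∈ Finset.univ.erase j, fac a f l :=
  (Finset.mul_prod_erase _ _ (Finset.mem_univ j)).symm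

theorem Phi_UP (a : Idx N n) (c : Loc N) (j : Fin n) (β : MI N →₀ ℕ) :
    Phi a c j (UP β) = fun f => TR (setA a j β) f c := by
  ext1 f
  rw [TR_apply, PP_split _ _ j]
  change DP (a.1 0) (c * (opj a j (UP β) (f j) * ∏ l ∈ Finset.univ.erase j, fac a f l)) = _
  have h1 : fac (setA a j β) f j = opj a j (UP β) (f j) := by simp [fac, opj, setA]
  have h2 : ∏ l ∈ Finset.univ.erase j, fac (setA a j β) f l =
      ∏ l ∈ Finset.univ.erase j, fac a f l := by
    refine Finset.prod_congr rfl fun l hl => ?_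
    simp [fac, setA, Finset.ne_of_mem_erase hl]
  rw [h1, h2]; rfl

theorem Phi_eD (a : Idx N n) (c : Loc N) (j : Fin n) (i : Fin N) (f : Fin n → Loc N) :
    TR a (Function.update f j (dD i (f j))) c = Phi a c j (UP (a.2 j) * eD i) f := by
  rw [TR_apply, PP_split _ _ j]
  have h1 : fac a (Function.update f j (dD i (f j))) j = opj a j (UP (a.2 j) * eD i) (f j) := by
    simp only [fac, opj, Function.update_self]; rfl
  have h2 : ∏ l ∈ Finset.univ.erase j, fac a (Function.update f j (dD i (f j))) l =
      ∏ l ∈ Finset.univ.erase j, fac a f l := by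
    refine Finset.prod_congr rfl fun l hl => ?_
    simp [fac, Finset.ne_of_mem_erase hl]
  rw [h1, h2]; rfl

theorem PP_setI (a : Idx N n) (i : Fin N) {l : Fin n} (hl : l ≠ 0) (f : Fin n → Loc N) :
    PP (setI a l (inc i (a.1 l))) f =
      dD i (fac a f l) * ∏ l' ∈ Finset.univ.erase l, fac a f l' := by
  rw [PP_split _ _ l]
  congr 1
  · simp [fac, setI, hl, DP_inc]
  · refine Finset.prod_congr rfl fun l' hl' => ?_
    simp [fac, setI, Finset.ne_of_mem_erase hl']

theorem leibniz_prod {ι : Type*} [DecidableEq ι] (i : Fin N) (S : Finset ι) (g : ι → Loc N) :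
    dD i (∏ l ∈ S, g l) = ∑ l ∈ S, dD i (g l) * ∏ l' ∈ S.erase l, g l' := by
  induction S using Finset.induction_on with
  | empty => simp
  | insert x S hx ih =>
    rw [Finset.prod_insert hx, Derivation.leibniz, Finset.sum_insert hx, ih, Finset.erase_insert hx]
    simp only [smul_eq_mul]
    rw [add_comm, mul_comm (∏ l ∈ S, g l), Finset.mul_sum]
    congr 1
    refine Finset.sum_congr rfl fun l hl => ?_
    rw [Finset.erase_insert_of_ne (by rintro rfl; exact hx hl),
      Finset.prod_insert (by simp [hx])]
    ring

theorem dD_PP (a : Idx N n) (i : Fin N) (f : Fin n → Loc N) :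
    dD i (PP a f) = dD i (fac a f 0) * ∏ l' ∈ Finset.univ.erase 0, fac a f l' +
      ∑ l ∈ Finset.univ.erase 0, PP (setI a l (inc i (a.1 l))) f := by
  have h : dD i (PP a f) = ∑ l, dD i (fac a f l) * ∏ l' ∈ Finset.univ.erase l, fac a f l' := by
    exact leibniz_prod i _ _
  rw [h, ← Finset.add_sum_erase _ _ (Finset.mem_univ 0)]
  congr 1
  exact Finset.sum_congr rfl fun l hl => (PP_setI a i (Finset.ne_of_mem_erase hl) f).symm

/-- The contribution of the commutator of `(∂/∂u)^{α_j}` and `d/dx^i` to `A ∘ d/dx^i_j`. -/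
theorem Phi_comm_mem (a : Idx N n) (c : Loc N) (j : Fin n) (i : Fin N) :
    Phi a c j (UP (a.2 j) * eD i - eD i * UP (a.2 j)) ∈ W N n (dg a) := by
  have := UP_eD i (a.2 j)
  refine (Submodule.span_le (p := (W N n (dg a)).comap (Phi a c j))).2 ?_ this
  rintro _ ⟨β, hβ, rfl⟩
  change Phi a c j (UP β) ∈ W N n (dg a)
  rw [Phi_UP]
  refine TR_mem_W _ _ ?_
  change degf (a.2 j) ≤ degf β + 1 at hβ
  unfold dg
  rw [← Finset.add_sum_erase _ _ (Finset.mem_univ j), ← Finset.add_sum_erase _ _ (Finset.mem_univ j)]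
  have : ∑ l ∈ Finset.univ.erase j, degf ((setA a j β).2 l) =
      ∑ l ∈ Finset.univ.erase j, degf (a.2 l) := by
    refine Finset.sum_congr rfl fun l hl => ?_
    simp [setA, Finset.ne_of_mem_erase hl]
  rw [this]
  simp only [setA, Function.update_self]
  omega

/-- The contribution to `A ∘ d/dx^i_j` in which `d/dx^i` acts after `(∂/∂u)^{α_j}`. For `j ≠ 0` it
only raises `I_j`; for `j = 0` it is integrated by parts, since the polarized form admits no total
derivative on the first factor. -/
theorem Phi_main_mem (a : Idx N n) (c : Loc N) (j : Fin n) (i : Fin N) :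
    Phi a c j (eD i * UP (a.2 j)) ∈ W N n (dg a) := by
  have hset : ∀ l ≠ (0 : Fin n), ∀ f, TR (setI a l (inc i (a.1 l))) f c =
      DP (a.1 0) (c * PP (setI a l (inc i (a.1 l))) f) := fun l hl f => by
    rw [TR_apply]; simp [setI, Ne.symm hl]
  by_cases hj : j = 0
  · subst hj
    have : Phi a c 0 (eD i * UP (a.2 0)) = (fun f => TR (up i a) f c) - (fun f => TR a f (dD i c)) -
        ∑ l ∈ Finset.univ.erase 0, fun f => TR (setI a l (inc i (a.1 l))) f c := by
      ext1 f
      simp only [Pi.sub_apply, Finset.sum_apply]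
      have h0 : Phi a c 0 (eD i * UP (a.2 0)) f = DP (a.1 0) (c * (dD i (fac a f 0) *
          ∏ l' ∈ Finset.univ.erase 0, fac a f l')) := by
        simp only [fac, if_true]; rfl
      rw [h0, eq_sub_of_add_eq (dD_PP a i f).symm,
        Finset.sum_congr rfl fun l hl => hset l (Finset.ne_of_mem_erase hl) f,
        TR_up, TR_apply, TR_apply, ← DP_dD, Derivation.leibniz, ← map_sub, ← map_sum, ← map_sub]
      congr 1
      simp only [smul_eq_mul, mul_sub, Finset.mul_sum]
      ring
    rw [this]
    refine Submodule.sub_mem _ (Submodule.sub_mem _ (TR_mem_W _ _ ?_) (TR_mem_W _ _ ?_))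
      (Submodule.sum_mem _ fun l _ => TR_mem_W _ _ ?_)
    · simp [up]
    · omega
    · exact Nat.le_succ _
  · have : Phi a c j (eD i * UP (a.2 j)) = fun f => TR (setI a j (inc i (a.1 j))) f c := by
      ext1 f
      rw [hset j hj, PP_setI _ _ hj]
      have : dD i (fac a f j) = opj a j (eD i * UP (a.2 j)) (f j) := by
        simp only [fac, opj, hj, if_false]
        rw [← DP_dD]; rfl
      rw [this]; rfl
    rw [this]
    exact TR_mem_W _ _ (Nat.le_succ _)

/-- Precomposition with a total derivative preserves local differential operators. -/
theorem IsR_pre (i : Fin N) (j : Fin n) {A : LOp N n} (hA : A ∈ IsR N n) :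
    (fun f => A (Function.update f j (dD i (f j)))) ∈ IsR N n := by
  classical
  obtain ⟨r, h1, h2⟩ := hA
  have hmem : ∀ a, (fun f => TR a (Function.update f j (dD i (f j))) (r a)) ∈ W N n (dg a) := by
    intro a
    have : (fun f => TR a (Function.update f j (dD i (f j))) (r a)) =
        Phi a (r a) j (UP (a.2 j) * eD i - eD i * UP (a.2 j)) +
        Phi a (r a) j (eD i * UP (a.2 j)) := by
      rw [← map_add]
      ext1 f
      rw [Phi_eD]
      refine congrFun (congrArg _ ?_) f
      ext1 x
      change _ = UP (a.2 j) (eD i x) - eD i (UP (a.2 j) x) + eD i (UP (a.2 j) x)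
      rw [sub_add_cancel]; rfl
    rw [this]
    exact Submodule.add_mem _ (Phi_comm_mem _ _ _ _) (Phi_main_mem _ _ _ _)
  choose s hs1 hs2 using fun a => exists_of_mem_W (hmem a)
  refine ⟨_, assemble (A := fun f => A (Function.update f j (dD i (f j)))) levelBdd_TR h1 (fun a => if r a = 0 then 0 else s a) 1
    (fun a h => by simp [h]) (fun a b hab => ?_) (fun f =>
      (h2 (Function.update f j (dD i (f j)))).mono fun S hS => ?_)⟩
  · split_ifs at hab with h
    · simp at hab
    · exact hs1 a b hab
  · rw [hS]
    refine Finset.sum_congr rfl fun a _ => ?_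
    split_ifs with h
    · simp [h]
    · exact hs2 a f

end Precomposition
end JetBundle

/-! ### Exponential test functions and leading terms -/

namespace JetBundle
open Filter

section Lead
variable {N : ℕ}

/-- `h t = E t · p(t)` for a polynomial `p` in the real parameter `t`, of degree at most `d` and
with coefficient `c` in degree `d`. -/
def Lead (E h : ℝ → Loc N) (d : ℕ) (c : Loc N) : Prop :=
  ∃ p : Polynomial (Loc N), p.natDegree ≤ d ∧ p.coeff d = c ∧
    ∀ t, h t = E t * p.eval (algebraMap ℝ (Loc N) t)

theorem Lead.mul {E E' h h' : ℝ → Loc N} {d d' : ℕ} {c c' : Loc N} (H : Lead E h d c)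
    (H' : Lead E' h' d' c') : Lead (E * E') (h * h') (d + d') (c * c') := by
  obtain ⟨p, h1, h2, h3⟩ := H
  obtain ⟨p', h1', h2', h3'⟩ := H'
  refine ⟨p * p', Polynomial.natDegree_mul_le.trans (by omega), ?_, fun t => ?_⟩
  · rw [Polynomial.coeff_mul_add_eq_of_natDegree_le h1 h1', h2, h2']
  · simp only [Pi.mul_apply, h3, h3', Polynomial.eval_mul]; ring

theorem Lead.prod {ι : Type*} (S : Finset ι) {E h : ι → ℝ → Loc N} {d : ι → ℕ} {c : ι → Loc N}
    (H : ∀ j ∈ S, Lead (E j) (h j) (d j) (c j)) :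
    Lead (∏ j ∈ S, E j) (∏ j ∈ S, h j) (∑ j ∈ S, d j) (∏ j ∈ S, c j) := by
  classical
  induction S using Finset.induction_on with
  | empty => exact ⟨1, by simp, by simp, by simp⟩
  | insert x S hx ih =>
    rw [Finset.prod_insert hx, Finset.prod_insert hx, Finset.prod_insert hx, Finset.sum_insert hx]
    exact (H x (Finset.mem_insert_self _ _)).mul (ih fun j hj => H j (Finset.mem_insert_of_mem hj))

theorem Lead.const_mul {E h : ℝ → Loc N} {d : ℕ} {c : Loc N} (H : Lead E h d c) (r : Loc N) :
    Lead E (fun t => r * h t) d (r * c) := by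
  obtain ⟨p, h1, h2, h3⟩ := H
  refine ⟨Polynomial.C r * p, (Polynomial.natDegree_C_mul_le _ _).trans h1, by simp [h2],
    fun t => ?_⟩
  simp only [h3, Polynomial.eval_mul, Polynomial.eval_C]; ring

theorem Lead.raise {E h : ℝ → Loc N} {d d' : ℕ} {c : Loc N} (H : Lead E h d c) (hd : d ≤ d') :
    Lead E h d' (if d = d' then c else 0) := by
  obtain ⟨p, h1, h2, h3⟩ := H
  refine ⟨p, h1.trans hd, ?_, h3⟩
  split_ifs with h
  · rw [← h, h2]
  · exact Polynomial.coeff_eq_zero_of_natDegree_lt (by omega)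

theorem Lead.sum {ι : Type*} (S : Finset ι) {E : ℝ → Loc N} {h : ι → ℝ → Loc N} {d : ℕ}
    {c : ι → Loc N} (H : ∀ j ∈ S, Lead E (h j) d (c j)) :
    Lead E (fun t => ∑ j ∈ S, h j t) d (∑ j ∈ S, c j) := by
  classical
  induction S using Finset.induction_on with
  | empty => exact ⟨0, by simp, by simp, by simp⟩
  | insert x S hx ih =>
    obtain ⟨p, h1, h2, h3⟩ := H x (Finset.mem_insert_self _ _)
    obtain ⟨p', h1', h2', h3'⟩ := ih fun j hj => H j (Finset.mem_insert_of_mem hj)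
    refine ⟨p + p', Polynomial.natDegree_add_le_of_degree_le h1 h1', ?_, fun t => ?_⟩
    · rw [Finset.sum_insert hx, Polynomial.coeff_add, h2, h2']
    · change ∑ j ∈ insert x S, h j t = _
      have h4 : ∑ j ∈ S, h j t = _ := h3' t
      rw [Finset.sum_insert hx, h3, h4, Polynomial.eval_add, mul_add]

/-- Differentiating multiplies `E` by a factor linear in `t`, so the degree goes up by one and the
top coefficient is multiplied by the slope `z`. -/
theorem Lead.dD (i : Fin N) {E h : ℝ → Loc N} {d : ℕ} {c : Loc N} (H : Lead E h d c) (z : ℝ)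
    (b : Loc N) (hE : ∀ t, JetBundle.dD i (E t) = (algebraMap ℝ (Loc N) (t * z) + b) * E t) :
    Lead E (fun t => JetBundle.dD i (h t)) (d + 1) (z • c) := by
  obtain ⟨p, h1, h2, h3⟩ := H
  set p' : Polynomial (Loc N) :=
    ∑ k ∈ Finset.range (d + 1), Polynomial.monomial k (JetBundle.dD i (p.coeff k)) with hp'
  have h1' : p'.natDegree ≤ d := by
    refine Polynomial.natDegree_sum_le_of_forall_le _ _ fun k hk => ?_
    exact (Polynomial.natDegree_monomial_le _).trans (by simp at hk; omega)
  refine ⟨(Polynomial.C (algebraMap ℝ (Loc N) z) * Polynomial.X) * p +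
    (Polynomial.C b * p + p'), ?_, ?_, fun t => ?_⟩
  · refine Polynomial.natDegree_add_le_of_degree_le ?_ (Polynomial.natDegree_add_le_of_degree_le
      ((Polynomial.natDegree_C_mul_le _ _).trans (by omega)) (by omega))
    refine Polynomial.natDegree_mul_le.trans ?_
    have : (Polynomial.C (algebraMap ℝ (Loc N) z) * Polynomial.X).natDegree ≤ 1 :=
      (Polynomial.natDegree_C_mul_le _ _).trans Polynomial.natDegree_X_le
    omega
  · rw [Polynomial.coeff_add, Polynomial.coeff_add, mul_assoc, Polynomial.coeff_C_mul,
      Polynomial.coeff_X_mul, Polynomial.coeff_C_mul,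
      Polynomial.coeff_eq_zero_of_natDegree_lt (p := p) (n := d + 1) (by omega),
      Polynomial.coeff_eq_zero_of_natDegree_lt (p := p') (n := d + 1) (by omega), h2,
      Algebra.smul_def]
    ring
  · have e1 : JetBundle.dD i (p.eval (algebraMap ℝ (Loc N) t)) =
        p'.eval (algebraMap ℝ (Loc N) t) := by
      rw [Polynomial.eval_eq_sum_range' (n := d + 1) (by omega), map_sum, hp',
        Polynomial.eval_finsetSum]
      refine Finset.sum_congr rfl fun k _ => ?_
      rw [Polynomial.eval_monomial, ← map_pow, mul_comm, ← Algebra.smul_def, Derivation.map_smul,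
        Algebra.smul_def, mul_comm]
    change JetBundle.dD i (h t) = _
    rw [h3, Derivation.leibniz, hE, e1]
    simp only [smul_eq_mul, Polynomial.eval_add, Polynomial.eval_mul, Polynomial.eval_C,
      Polynomial.eval_X, map_mul]
    ring

/-- Evaluation at a point of the jet bundle. -/
noncomputable def evalPt (p : JetPt N) : Loc N →+* ℝ where
  toFun f := f.1 p
  map_one' := rfl
  map_mul' _ _ := rfl
  map_zero' := rfl
  map_add' _ _ := rfl

/-- If `h` vanishes identically, so does its top coefficient: at each point of the jet bundle, `p` is
a real polynomial with infinitely many zeros. -/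
theorem Lead.eq_zero {E h : ℝ → Loc N} {d : ℕ} {c : Loc N} (H : Lead E h d c)
    (hE : ∀ t, IsUnit (E t)) (h0 : ∀ t, h t = 0) : c = 0 := by
  obtain ⟨p, h1, h2, h3⟩ := H
  have hz : ∀ t, p.eval (algebraMap ℝ (Loc N) t) = 0 := fun t => by
    have := (h3 t).symm.trans (h0 t)
    exact (hE t).mul_right_eq_zero.1 this
  ext pt
  have : p.map (evalPt pt) = 0 := by
    refine Polynomial.funext fun t => ?_
    have h4 := Polynomial.eval₂_at_apply (p := p) (evalPt pt) (algebraMap ℝ (Loc N) t)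
    rw [hz, map_zero] at h4
    rw [Polynomial.eval_map, Polynomial.eval_zero]
    exact h4
  have h5 := congrArg (fun q => Polynomial.coeff q d) this
  simp only [Polynomial.coeff_map, h2, Polynomial.coeff_zero] at h5
  exact h5

theorem Lead.DP (K : MI N) {E h : ℝ → Loc N} {d : ℕ} {c : Loc N} (H : Lead E h d c)
    (z : Fin N → ℝ) (b : Fin N → Loc N)
    (hE : ∀ i t, JetBundle.dD i (E t) = (algebraMap ℝ (Loc N) (t * z i) + b i) * E t) :
    Lead E (fun t => JetBundle.DP K (h t)) (d + ∑ i, K i) ((∏ i, z i ^ K i) • c) := by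
  induction K using MI_induct with
  | h0 => simpa using H
  | hs i K ih =>
    have h1 := ih.dD i (z i) (b i) (hE i)
    have e1 : (∏ l, z l ^ inc i K l) = z i * ∏ l, z l ^ K l := by
      simp only [inc_apply, pow_add, Finset.prod_mul_distrib]
      rw [mul_comm]
      congr 1
      simp [Finset.prod_ite_eq']
    rw [e1, mul_smul, sum_inc, ← add_assoc]
    simpa only [DP_inc] using h1

/-- Exponential test functions: `e t = exp (t Σ_i ξ_i x^i + Σ_J η_J u_J)`. -/
theorem exists_test (J0 : Finset (MI N)) (ξ : Fin N → ℝ) (η : MI N → ℝ)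
    (hη : ∀ J ∉ J0, η J = 0) : ∃ (e : ℝ → Loc N) (b : Fin N → Loc N), (∀ t, IsUnit (e t)) ∧
      (∀ i t, dD i (e t) = (algebraMap ℝ (Loc N) (t * ξ i) + b i) * e t) ∧
      ∀ α t, UP α (e t) = (∏ J ∈ α.support, η J ^ α J) • e t := by
  classical
  choose e he1 he2 he3 using fun t : ℝ =>
    exists_exp ((∑ i, (t * ξ i) • xc i) + ∑ J ∈ J0, η J • uc J)
  have hX : ∀ i t, dX i (e t) = algebraMap ℝ (Loc N) (t * ξ i) * e t := by
    intro i t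
    rw [he2, map_add, map_sum, map_sum]
    simp [dX_xc, dX_uc, Algebra.smul_def]
  have hU : ∀ J t, dU J (e t) = η J • e t := by
    intro J t
    rw [he3, map_add, map_sum, map_sum]
    simp only [Derivation.map_smul, dU_xc, dU_uc, smul_zero, Finset.sum_const_zero, zero_add,
      smul_ite, Finset.sum_ite_eq]
    split_ifs with h
    · simp
    · simp [hη J h]
  refine ⟨e, fun i => ∑ J ∈ J0, uc (inc i J) * algebraMap ℝ (Loc N) (η J), he1, fun i t => ?_,
    fun α t => ?_⟩
  · rw [dD_eq i (e t) J0 (fun J hJ => by rw [hU, hη J hJ, zero_smul]), hX, add_mul, Finset.sum_mul]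
    congr 1
    refine Finset.sum_congr rfl fun J _ => ?_
    rw [hU, Algebra.smul_def, mul_assoc]
  · change _ = (α.prod fun J k => η J ^ k) • e t
    induction α using finsupp_induct with
    | h0 => simp
    | hs J α ih =>
      rw [UP_add_single, ih, Derivation.map_smul, hU, smul_smul,
        Finsupp.prod_add_index' (by simp) (by intros; rw [pow_add])]
      simp

end Lead
end JetBundle

/-! ### Uniqueness of right coefficients -/

namespace JetBundle
open Filter

section Uniqueness
variable {N n : ℕ} [NeZero n]

/-- The total order in the total derivatives of an index. -/
def ordI (a : Idx N n) : ℕ := ∑ j, ∑ i, a.1 j i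

/-- The symbol of a right-coefficient term on exponential test functions. -/
theorem lead_TR (a : Idx N n) (c : Loc N) (z : Fin n → Fin N → ℝ) (η : Fin n → MI N → ℝ)
    (e : Fin n → ℝ → Loc N) (b : Fin n → Fin N → Loc N) (ξ : Fin n → Fin N → ℝ)
    (hξ : ∀ j ≠ 0, ξ j = z j) (hξ0 : ∀ i, z 0 i = ∑ j, ξ j i)
    (he : ∀ j i t, dD i (e j t) = (algebraMap ℝ (Loc N) (t * ξ j i) + b j i) * e j t)
    (hU : ∀ j α t, UP α (e j t) = (∏ J ∈ α.support, η j J ^ α J) • e j t) :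
    Lead (∏ j, e j) (fun t => TR a (fun j => e j t) c) (ordI a)
      (((∏ j, ∏ i, z j i ^ a.1 j i) * ∏ j, ∏ J ∈ (a.2 j).support, η j J ^ a.2 j J) • c) := by
  classical
  have hf : ∀ j, Lead (e j) (fun t => fac a (fun j => e j t) j) (if j = 0 then 0 else ∑ i, a.1 j i)
      (algebraMap ℝ (Loc N) ((if j = 0 then 1 else ∏ i, z j i ^ a.1 j i) *
        ∏ J ∈ (a.2 j).support, η j J ^ a.2 j J)) := by
    intro j
    have h0 : Lead (e j) (fun t => UP (a.2 j) (e j t)) 0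
        (algebraMap ℝ (Loc N) (∏ J ∈ (a.2 j).support, η j J ^ a.2 j J)) := by
      refine ⟨Polynomial.C (algebraMap ℝ (Loc N) (∏ J ∈ (a.2 j).support, η j J ^ a.2 j J)),
        Polynomial.natDegree_C _ |>.le, Polynomial.coeff_C_zero, fun t => ?_⟩
      change UP (a.2 j) (e j t) = _
      rw [hU, Polynomial.eval_C, Algebra.smul_def, mul_comm]
    by_cases hj : j = 0
    · simp only [fac, if_pos hj, one_mul]
      exact h0
    · have h1 := h0.DP (a.1 j) (ξ j) (b j) (he j)
      simp only [fac, if_neg hj]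
      rw [zero_add, hξ j hj, Algebra.smul_def, ← map_mul] at h1
      exact h1
  have hP : Lead (∏ j, e j) (fun t => PP a fun j => e j t)
      (∑ j : Fin n, if j = 0 then 0 else ∑ i, a.1 j i)
      (∏ j, algebraMap ℝ (Loc N) ((if j = 0 then 1 else ∏ i, z j i ^ a.1 j i) *
        ∏ J ∈ (a.2 j).support, η j J ^ a.2 j J)) := by
    have := Lead.prod Finset.univ fun j _ => hf j
    have e1 : (∏ j, fun t => fac a (fun j => e j t) j) = fun t => PP a fun j => e j t := by
      ext1 t
      simp [PP, Finset.prod_apply]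
    rw [e1] at this
    exact this
  have hE : ∀ i t, dD i ((∏ j, e j) t) =
      (algebraMap ℝ (Loc N) (t * z 0 i) + ∑ j, b j i) * (∏ j, e j) t := by
    intro i t
    rw [Finset.prod_apply, leibniz_prod, hξ0, Finset.mul_sum, map_sum, ← Finset.sum_add_distrib,
      Finset.sum_mul]
    refine Finset.sum_congr rfl fun j _ => ?_
    rw [he, mul_assoc, Finset.mul_prod_erase _ (fun j => e j t) (Finset.mem_univ j)]
  have := (hP.const_mul c).DP (a.1 0) (z 0) (fun i => ∑ j, b j i) hE
  have e1 : (∑ j : Fin n, if j = 0 then 0 else ∑ i, a.1 j i) + ∑ i, a.1 0 i = ordI a := by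
    unfold ordI
    rw [← Finset.add_sum_erase _ _ (Finset.mem_univ (0 : Fin n)),
      ← Finset.add_sum_erase (a := (0 : Fin n)) _ (fun j => ∑ i, a.1 j i) (Finset.mem_univ _), if_pos rfl,
      zero_add, add_comm]
    congr 1
    exact Finset.sum_congr rfl fun j hj => if_neg (Finset.ne_of_mem_erase hj)
  have e2 : (∏ i, z 0 i ^ a.1 0 i) * (∏ j : Fin n, if j = 0 then 1 else ∏ i, z j i ^ a.1 j i) =
      ∏ j, ∏ i, z j i ^ a.1 j i := by
    rw [← Finset.mul_prod_erase _ _ (Finset.mem_univ (0 : Fin n)),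
      ← Finset.mul_prod_erase (a := (0 : Fin n)) _ (fun j => ∏ i, z j i ^ a.1 j i)
        (Finset.mem_univ _), if_pos rfl, one_mul]
    congr 1
    exact Finset.prod_congr rfl fun j hj => if_neg (Finset.ne_of_mem_erase hj)
  rw [e1] at this
  convert this using 1
  · rfl
  rw [← map_prod, Finset.prod_mul_distrib, mul_comm c, ← Algebra.smul_def, smul_smul, ← e2,
    mul_assoc]

/-- Right coefficients are determined by the operator. -/
theorem presT_unique {r : Idx N n → Loc N} (hr : GoodL r) (h0 : PresT TR r (0 : LOp N n)) :
    r = 0 := by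
  classical
  by_contra hne
  obtain ⟨a0, ha0⟩ := Function.ne_iff.1 hne
  -- test functions `exp (⋯)` involving only the `u_J` with `J ∈ J0` see only finitely many terms
  set J0 : Finset (MI N) := Finset.univ.biUnion fun j => (a0.2 j).support with hJ0
  set m : ℕ := J0.sup fun J => ∑ i, J i with hm
  have hfin : {a | r a ≠ 0 ∧ ∀ j, (a.2 j).support ⊆ J0}.Finite := by
    refine (hr (n * m)).subset ?_
    rintro a ⟨h1, h2⟩
    refine ⟨h1, ?_⟩
    calc dg a ≤ ∑ _j : Fin n, m := Finset.sum_le_sum fun j _ => Finset.sup_mono (h2 j)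
      _ = n * m := by simp
  set F : Finset (Idx N n) := hfin.toFinset with hF
  have ha0F : a0 ∈ F := hfin.mem_toFinset.2
    ⟨ha0, fun j => Finset.subset_biUnion_of_mem (fun j => (a0.2 j).support) (Finset.mem_univ j)⟩
  -- an index of maximal order among those tested
  obtain ⟨a1, ha1, hmax⟩ := F.exists_max_image ordI ⟨a0, ha0F⟩
  set F1 := F.filter fun a => ordI a = ordI a1 with hF1
  -- the leading symbol vanishes
  have key : ∀ (z : Fin n → Fin N → ℝ) (η : Fin n → MI N → ℝ), (∀ j, ∀ J ∉ J0, η j J = 0) →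
      ∑ a ∈ F1, ((∏ j, ∏ i, z j i ^ a.1 j i) *
        ∏ j, ∏ J ∈ (a.2 j).support, η j J ^ a.2 j J) • r a = 0 := by
    intro z η hη
    -- `(d/dx)^{I_1}` acts on the whole product, so its symbol is `z 0 = Σ_j ξ j`
    set ξ : Fin n → Fin N → ℝ := fun j i =>
      if j = 0 then z 0 i - ∑ j ∈ Finset.univ.erase (0 : Fin n), z j i else z j i with hξ
    choose e b he1 he2 he3 using fun j => exists_test J0 (ξ j) (η j) (hη j)
    have hξ0 : ∀ i, z 0 i = ∑ j, ξ j i := by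
      intro i
      rw [← Finset.add_sum_erase _ _ (Finset.mem_univ (0 : Fin n))]
      simp only [hξ, if_true]
      rw [Finset.sum_congr rfl fun j hj => if_neg (Finset.ne_of_mem_erase hj)]
      ring
    have hlead := Lead.sum F fun a ha =>
      (lead_TR a (r a) z η e b ξ (fun j hj => by ext i; simp [hξ, hj]) hξ0 he2 he3).raise (hmax a ha)
    have hzero := hlead.eq_zero (fun t => by
      rw [Finset.prod_apply]
      exact IsUnit.prod_univ_iff.2 fun j => he1 j t) (fun t => by
      obtain ⟨S, hS, hFS⟩ := ((h0 fun j => e j t).and (eventually_ge_atTop F)).exists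
      rw [Pi.zero_apply] at hS
      rw [hS]
      refine Finset.sum_subset hFS fun a _ ha => ?_
      by_cases hra : r a = 0
      · rw [hra, map_zero]
      · have : ∃ j, ¬ (a.2 j).support ⊆ J0 := by
          by_contra hcon
          push Not at hcon
          exact ha (hfin.mem_toFinset.2 ⟨hra, hcon⟩)
        obtain ⟨j, hj⟩ := this
        obtain ⟨J, hJ, hJ'⟩ := Finset.not_subset.1 hj
        have hUz : UP (a.2 j) (e j t) = 0 := by
          rw [he3, Finset.prod_eq_zero hJ, zero_smul]
          rw [hη j J hJ', zero_pow (Finsupp.mem_support_iff.1 hJ)]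
        have : PP a (fun j => e j t) = 0 := by
          refine Finset.prod_eq_zero (Finset.mem_univ j) ?_
          simp only [fac, hUz, map_zero, ite_self]
        rw [TR_apply, this, mul_zero, map_zero])
    rw [hF1, Finset.sum_filter]
    exact hzero
  -- hence so do its coefficients, at each point of the jet bundle
  let μ : Idx N n → ((Fin n × Fin N) ⊕ (Fin n × J0)) →₀ ℕ := fun a =>
    Finsupp.equivFunOnFinite.symm (Sum.elim (fun x => a.1 x.1 x.2) fun y => a.2 y.1 y.2)
  have hμ : ∀ a ∈ F, ∀ a' ∈ F, μ a = μ a' → a = a' := by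
    intro a ha a' ha' h
    have h' : ∀ x, μ a x = μ a' x := fun x => by rw [h]
    refine Prod.ext ?_ ?_
    · ext j i
      exact h' (Sum.inl (j, i))
    · ext j J
      by_cases hJ : J ∈ J0
      · exact h' (Sum.inr (j, ⟨J, hJ⟩))
      · have q1 := (hfin.mem_toFinset.1 ha).2 j
        have q2 := (hfin.mem_toFinset.1 ha').2 j
        rw [Finsupp.notMem_support_iff.1 fun h => hJ (q1 h),
          Finsupp.notMem_support_iff.1 fun h => hJ (q2 h)]
  have hra1 : r a1 ≠ 0 := (hfin.mem_toFinset.1 ha1).1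
  refine hra1 ?_
  ext pt
  have hpoly : ∑ a ∈ F1, MvPolynomial.monomial (μ a) ((r a).1 pt) = 0 := by
    refine MvPolynomial.funext fun x => ?_
    have h1 := key (fun j i => x (Sum.inl (j, i)))
      (fun j J => if hJ : J ∈ J0 then x (Sum.inr (j, ⟨J, hJ⟩)) else 0)
      (fun j J hJ => dif_neg hJ)
    have h2 := congrArg (evalPt pt) h1
    rw [map_sum, map_zero] at h2
    rw [map_sum, map_zero, ← h2]
    refine Finset.sum_congr rfl fun a ha => ?_
    have haF := (hfin.mem_toFinset.1 (Finset.mem_filter.1 ha).1).2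
    have e0 : ∀ (c : ℝ) (g : Loc N), evalPt pt (c • g) = c * g.1 pt := fun c g => rfl
    rw [e0, MvPolynomial.eval_monomial, mul_comm]
    congr 1
    rw [Finsupp.prod_fintype _ _ (by simp), Fintype.prod_sum_type, Fintype.prod_prod_type,
      Fintype.prod_prod_type]
    congr 1
    refine Finset.prod_congr rfl fun j _ => ?_
    rw [Finset.prod_subset (haF j) (fun J _ hJ => by
      rw [Finsupp.notMem_support_iff.1 hJ, pow_zero]), ← Finset.prod_coe_sort J0]
    refine Finset.prod_congr rfl fun J _ => ?_
    simp [μ]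
  have hc := congrArg (MvPolynomial.coeff (μ a1)) hpoly
  rw [MvPolynomial.coeff_sum, MvPolynomial.coeff_zero, Finset.sum_eq_single a1] at hc
  · simpa using hc
  · intro a ha hne
    rw [MvPolynomial.coeff_monomial, if_neg]
    exact fun h => hne (hμ a (Finset.mem_filter.1 ha).1 a1 ha1 h)
  · intro h
    exact absurd (Finset.mem_filter.2 ⟨ha1, rfl⟩ : a1 ∈ F1) h

end Uniqueness
end JetBundle

/-! ### Signs and the Koszul complex -/

namespace JetBundle
open Filter

section Signs
variable {N : ℕ}

/-- The sign `(-1)^{pos i δ}` of `dx^i ∧`. -/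
noncomputable def sg (i : Fin N) (δ : Fin N → Bool) : ℝ := (-1) ^ pos i δ

theorem sg_mul_self (i : Fin N) (δ : Fin N → Bool) : sg i δ * sg i δ = 1 := by
  unfold sg
  rw [← mul_pow]; simp

theorem wt_set {i : Fin N} {δ : Fin N → Bool} (h : δ i = false) :
    wt (Function.update δ i true) = wt δ + 1 := by
  unfold wt
  rw [← Finset.add_sum_erase _ _ (Finset.mem_univ i),
    ← Finset.add_sum_erase (a := i) _ (fun i => if δ i then 1 else 0) (Finset.mem_univ i)]
  have : ∑ x ∈ Finset.univ.erase i, (if Function.update δ i true x = true then 1 else 0) =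
      ∑ x ∈ Finset.univ.erase i, if δ x = true then 1 else 0 := by
    refine Finset.sum_congr rfl fun x hx => ?_
    rw [Function.update_of_ne (Finset.ne_of_mem_erase hx)]
  rw [this]
  simp [h]; omega

theorem wt_unset {i : Fin N} {δ : Fin N → Bool} (h : δ i = true) :
    wt (Function.update δ i false) + 1 = wt δ := by
  have := wt_set (i := i) (δ := Function.update δ i false) (by simp)
  rw [← this]; congr 1
  ext x
  by_cases hx : x = i
  · subst hx; simp [h]
  · simp [hx]

theorem wt_true : wt (fun _ : Fin N => true) = N := by simp [wt]

theorem wt_eq_iff (δ : Fin N → Bool) : wt δ = N ↔ δ = fun _ => true := by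
  constructor
  · intro h
    by_contra hne
    obtain ⟨i, hi⟩ := Function.ne_iff.1 hne
    have h1 := wt_set (i := i) (δ := δ) (by simpa using hi)
    have h2 : wt (Function.update δ i true) ≤ N := by
      unfold wt
      calc _ ≤ ∑ _x : Fin N, 1 := Finset.sum_le_sum fun x _ => by split_ifs <;> simp
        _ = N := by simp
    omega
  · rintro rfl; exact wt_true

theorem wt_le (δ : Fin N → Bool) : wt δ ≤ N := by
  unfold wt
  calc _ ≤ ∑ _x : Fin N, 1 := Finset.sum_le_sum fun x _ => by split_ifs <;> simp
    _ = N := by simp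

theorem pos_update_self (i : Fin N) (δ : Fin N → Bool) (v : Bool) :
    pos i (Function.update δ i v) = pos i δ := by
  unfold pos
  refine Finset.sum_congr rfl fun l _ => ?_
  by_cases h : l = i
  · subst h; simp
  · simp [h]

theorem sg_update_self (i : Fin N) (δ : Fin N → Bool) (v : Bool) :
    sg i (Function.update δ i v) = sg i δ := by
  unfold sg; rw [pos_update_self]

theorem pos_set {i j : Fin N} {δ : Fin N → Bool} (h : δ j = false) :
    pos i (Function.update δ j true) = pos i δ + if j < i then 1 else 0 := by
  unfold pos
  rw [← Finset.add_sum_erase _ _ (Finset.mem_univ j),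
    ← Finset.add_sum_erase (a := j) _ (fun l => if l < i ∧ δ l then 1 else 0) (Finset.mem_univ j)]
  have : ∑ x ∈ Finset.univ.erase j, (if x < i ∧ Function.update δ j true x = true then 1 else 0) =
      ∑ x ∈ Finset.univ.erase j, if x < i ∧ δ x = true then 1 else 0 := by
    refine Finset.sum_congr rfl fun x hx => ?_
    rw [Function.update_of_ne (Finset.ne_of_mem_erase hx)]
  rw [this]
  simp [h]; omega

theorem sg_set {i j : Fin N} {δ : Fin N → Bool} (h : δ j = false) :
    sg i (Function.update δ j true) = (if j < i then -1 else 1) * sg i δ := by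
  unfold sg
  rw [pos_set h, pow_add]
  split_ifs <;> simp

theorem sg_unset {i j : Fin N} {δ : Fin N → Bool} (h : δ j = true) :
    sg i (Function.update δ j false) = (if j < i then -1 else 1) * sg i δ := by
  have := sg_set (i := i) (j := j) (δ := Function.update δ j false) (by simp)
  rw [Function.update_idem, ← h, Function.update_eq_self] at this
  rw [this, ← mul_assoc]
  split_ifs <;> simp

end Signs

section Koszul
variable {N : ℕ}

/-- Decrease the `i`-th entry of a multi-index. -/
def dec (i : Fin N) (K : MI N) : MI N := Function.update K i (K i - 1)

theorem inc_dec {i : Fin N} {K : MI N} (h : 0 < K i) : inc i (dec i K) = K := by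
  unfold inc dec
  rw [Function.update_idem, Function.update_self, Nat.sub_add_cancel h, Function.update_eq_self]

theorem dec_inc (i : Fin N) (K : MI N) : dec i (inc i K) = K := by
  unfold inc dec
  rw [Function.update_idem, Function.update_self, Nat.add_sub_cancel, Function.update_eq_self]

theorem inc_dec_comm {i j : Fin N} (h : i ≠ j) (K : MI N) : inc j (dec i K) = dec i (inc j K) := by
  unfold inc dec
  rw [Function.update_of_ne h.symm, Function.update_of_ne h, Function.update_comm h]

variable {V : Type*} [AddCommGroup V] [Module ℝ V]

/-- The Koszul differential on families of coefficients. -/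
noncomputable def kd (R : (Fin N → Bool) → MI N → V) (δ : Fin N → Bool) (K : MI N) : V :=
  ∑ i, if δ i = true ∧ 0 < K i then sg i δ • R (Function.update δ i false) (dec i K) else 0

/-- The contracting homotopy of the Koszul complex, normalized for forms of weight `w`. -/
noncomputable def kh (w : ℤ) (R : (Fin N → Bool) → MI N → V) (δ : Fin N → Bool) (K : MI N) : V :=
  ((∑ i, K i : ℕ) + 1 + N - w : ℝ)⁻¹ •
    ∑ i, if δ i = false then
      (sg i δ * (K i + 1)) • R (Function.update δ i true) (inc i K) else 0

/-- Exactness of the Koszul complex, away from the constants in top degree. -/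
theorem kd_kh {w : ℤ} {R : (Fin N → Bool) → MI N → V} (hw : ∀ δ, (wt δ : ℤ) ≠ w → R δ = 0)
    (htop : R (fun _ => true) 0 = 0) (hcl : ∀ δ K, kd R δ K = 0) (δ : Fin N → Bool) (K : MI N) :
    kd (kh w R) δ K = R δ K := by
  by_cases hδ : (wt δ : ℤ) = w
  swap
  · rw [hw δ hδ, kd]
    refine Finset.sum_eq_zero fun i _ => ?_
    split_ifs with h
    · have : kh w R (Function.update δ i false) (dec i K) = 0 := by
        unfold kh
        refine (congrArg _ (Finset.sum_eq_zero fun j _ => ?_)).trans (smul_zero _)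
        split_ifs with hj
        · rw [hw, Pi.zero_apply, smul_zero]
          have := wt_unset h.1
          rw [wt_set hj]
          push_cast
          omega
        · rfl
      rw [this, smul_zero]
    · rfl
  set D : ℝ := (∑ i, K i : ℕ) + N - w with hD
  have hDz : D = ((∑ i, K i + (N - wt δ) : ℕ) : ℝ) := by
    rw [hD, ← hδ]; push_cast [Nat.cast_sub (wt_le δ)]; ring
  by_cases hD0 : D = 0
  · rw [hDz] at hD0
    have hz : ∑ i, K i + (N - wt δ) = 0 := by exact_mod_cast hD0
    have hK : K = 0 := by
      ext i
      exact Finset.sum_eq_zero_iff.1 (by omega : ∑ i, K i = 0) i (Finset.mem_univ i)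
    have hδ' : δ = fun _ => true := (wt_eq_iff δ).1 (by have := wt_le δ; omega)
    subst hK hδ'
    rw [htop, kd]
    exact Finset.sum_eq_zero fun i _ => by simp
  -- the homotopy formula, before normalization
  suffices h : D • kd (kh w R) δ K = D • R δ K from smul_right_injective V hD0 h
  have hdec : ∀ i, 0 < K i → (((∑ l, dec i K l : ℕ) : ℝ) + 1 + N - w) = D := by
    intro i hi
    have := sum_inc i (dec i K)
    rw [inc_dec hi] at this
    rw [hD, this]; push_cast; ring
  have e1 : D • kd (kh w R) δ K = ∑ i, if δ i = true ∧ 0 < K i then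
      sg i δ • ∑ j, (if Function.update δ i false j = false then
        (sg j (Function.update δ i false) * (dec i K j + 1)) •
          R (Function.update (Function.update δ i false) j true) (inc j (dec i K)) else 0)
      else 0 := by
    rw [kd, Finset.smul_sum]
    refine Finset.sum_congr rfl fun i _ => ?_
    split_ifs with h
    · rw [kh, hdec i h.2, smul_comm D, smul_smul D, mul_inv_cancel₀ hD0, one_smul]
    · rw [smul_zero]
  have e2 : ∀ i, (if δ i = true ∧ 0 < K i then
      sg i δ • ∑ j, (if Function.update δ i false j = false then
        (sg j (Function.update δ i false) * (dec i K j + 1)) •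
          R (Function.update (Function.update δ i false) j true) (inc j (dec i K)) else 0)
      else 0) = (if δ i = true then (K i : ℝ) • R δ K else 0) +
        ∑ j, if δ j = false ∧ δ i = true ∧ 0 < K i then
          (sg i δ * sg j (Function.update δ i false) * (K j + 1)) •
            R (Function.update (Function.update δ j true) i false) (dec i (inc j K)) else 0 := by
    intro i
    by_cases hi : δ i = true ∧ 0 < K i
    · have hKi : ((dec i K i : ℕ) : ℝ) + 1 = K i := by
        have : dec i K i + 1 = K i := by simp only [dec, Function.update_self]; omega
        exact_mod_cast this
      rw [if_pos hi, if_pos hi.1, ← Finset.add_sum_erase _ _ (Finset.mem_univ i), if_pos (by simp),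
        smul_add, smul_smul, sg_update_self, ← mul_assoc, sg_mul_self, one_mul, hKi, inc_dec hi.2,
        Function.update_idem, ← hi.1, Function.update_eq_self]
      congr 1
      rw [← Finset.add_sum_erase _ _ (Finset.mem_univ i),
        if_neg (by simp [hi.1]), zero_add, Finset.smul_sum]
      refine Finset.sum_congr rfl fun j hj => ?_
      have hji := Finset.ne_of_mem_erase hj
      rw [Function.update_of_ne hji]
      by_cases hδj : δ j = false
      · rw [if_pos hδj, if_pos ⟨hδj, rfl, hi.2⟩, smul_smul, inc_dec_comm hji.symm,
          Function.update_comm hji.symm, mul_assoc, hi.1]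
        have : dec i K j = K j := by simp [dec, hji]
        rw [this]
      · rw [if_neg hδj, smul_zero, if_neg fun h => hδj h.1]
    · rw [if_neg hi]
      have h0 : (if δ i = true then (K i : ℝ) • R δ K else 0) = 0 := by
        split_ifs with h
        · have : K i = 0 := by
            by_contra h'
            exact hi ⟨h, Nat.pos_of_ne_zero h'⟩
          rw [this]; simp
        · rfl
      rw [h0, zero_add, Finset.sum_eq_zero]
      intro j _
      rw [if_neg fun h => hi h.2]
  rw [e1, Finset.sum_congr rfl fun i _ => e2 i, Finset.sum_add_distrib, Finset.sum_comm]
  have e3 : ∀ j, (∑ i, if δ j = false ∧ δ i = true ∧ 0 < K i then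
          (sg i δ * sg j (Function.update δ i false) * (K j + 1)) •
            R (Function.update (Function.update δ j true) i false) (dec i (inc j K)) else 0) =
        if δ j = false then ((K j : ℝ) + 1) • R δ K else 0 := by
    intro j
    split_ifs with hj
    swap
    · refine Finset.sum_eq_zero fun i _ => if_neg fun h => hj h.1
    have hc := hcl (Function.update δ j true) (inc j K)
    rw [kd, ← Finset.add_sum_erase _ _ (Finset.mem_univ j), if_pos (by simp [inc]), dec_inc,
      Function.update_idem, sg_update_self, ← hj, Function.update_eq_self, hj] at hc
    have hc' := congrArg (fun v => (sg j δ * ((K j : ℝ) + 1)) • v) (eq_neg_of_add_eq_zero_left hc)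
    simp only [smul_smul] at hc'
    rw [mul_right_comm, sg_mul_self, one_mul] at hc'
    rw [hc', smul_neg, Finset.smul_sum, ← Finset.sum_neg_distrib,
      ← Finset.add_sum_erase _ _ (Finset.mem_univ j), if_neg (by simp [hj]), zero_add]
    refine Finset.sum_congr rfl fun i hi => ?_
    have hij := Finset.ne_of_mem_erase hi
    have hKi : inc j K i = K i := by simp [inc, hij]
    rw [Function.update_of_ne hij, hKi]
    by_cases h : δ i = true ∧ 0 < K i
    · rw [if_pos ⟨hj, h⟩, if_pos h, smul_smul, ← neg_smul]
      congr 1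
      rw [sg_set hj, sg_unset h.1]
      rcases lt_or_gt_of_ne hij with h' | h'
      · simp only [h', not_lt_of_gt h', if_true, if_false]; ring
      · simp only [h', not_lt_of_gt h', if_true, if_false]; ring
    · rw [if_neg fun h' => h h'.2, if_neg h, smul_zero, neg_zero]
  rw [Finset.sum_congr rfl fun j _ => e3 j, ← Finset.sum_add_distrib]
  have e4 : ∀ i, ((if δ i = true then (K i : ℝ) • R δ K else 0) +
      if δ i = false then ((K i : ℝ) + 1) • R δ K else 0) =
      ((K i : ℝ) + 1 - if δ i then 1 else 0) • R δ K := by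
    intro i
    cases δ i <;> simp
  rw [Finset.sum_congr rfl fun j _ => e4 j, ← Finset.sum_smul]
  congr 1
  rw [Finset.sum_sub_distrib, Finset.sum_add_distrib, hD, ← hδ]
  simp [wt]

end Koszul
end JetBundle

/-! ### Exactness of the operator complex -/

namespace JetBundle
open Filter

section OperatorComplex
variable {N n : ℕ} [NeZero n]

/-- Post-composition with the total derivative `d/dx^i`. -/
noncomputable def dop (i : Fin N) : LOp N n →ₗ[ℝ] LOp N n where
  toFun A f := dD i (A f)
  map_add' _ _ := by ext1 f; exact map_add _ _ _
  map_smul' _ _ := by ext1 f; exact Derivation.map_smul _ _ _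

/-- Pre-composition with the total derivative `d/dx^i` in the `j`-th argument. -/
noncomputable def pre (i : Fin N) (j : Fin n) : LOp N n →ₗ[ℝ] LOp N n where
  toFun A f := A (Function.update f j (dD i (f j)))
  map_add' _ _ := rfl
  map_smul' _ _ := rfl

/-- The horizontal differential on forms with coefficients in operators. -/
noncomputable def dL (ω : (Fin N → Bool) → LOp N n) (δ : Fin N → Bool) : LOp N n :=
  ∑ i, if δ i = true then sg i δ • dop i (ω (Function.update δ i false)) else 0

theorem up_injective (i : Fin N) : Function.Injective (up (n := n) i) := by
  refine Function.LeftInverse.injective (g := fun b => setK b (dec i (b.1 0))) fun a => ?_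
  simp [up, dec_inc]

theorem presT_dop (i : Fin N) {r : Idx N n → Loc N} (hr : GoodL r) {A : LOp N n}
    (hA : PresT TR r A) :
    GoodL (fun b : Idx N n => if 0 < b.1 0 i then r (setK b (dec i (b.1 0))) else 0) ∧
    PresT TR (fun b : Idx N n => if 0 < b.1 0 i then r (setK b (dec i (b.1 0))) else 0)
      (dop i A) := by
  have e : (fun b : Idx N n => if 0 < b.1 0 i then r (setK b (dec i (b.1 0))) else 0) =
      fun b => ∑ᶠ a, Finsupp.single (up i a) (r a) b := by
    ext1 b
    by_cases h : 0 < b.1 0 i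
    · have hb : up i (setK b (dec i (b.1 0))) = b := by simp [up, inc_dec h]
      rw [if_pos h, finsum_eq_single _ (setK b (dec i (b.1 0))), hb, Finsupp.single_eq_same]
      intro a ha
      rw [Finsupp.single_eq_of_ne]
      rintro rfl
      exact ha (up_injective i hb.symm)
    · rw [if_neg h]
      symm
      refine (finsum_congr fun a => ?_).trans finsum_zero
      rw [Finsupp.single_eq_of_ne]
      rintro rfl
      exact h (by simp [up, inc])
  rw [e]
  exact presT_post i hr hA

theorem presT_sum {ι : Type*} (S : Finset ι) {T : Idx N n → (Fin n → Loc N) → (Loc N →ₗ[ℝ] Loc N)}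
    {r : ι → Idx N n → Loc N} {A : ι → LOp N n}
    (h : ∀ i ∈ S, GoodL (r i) ∧ PresT T (r i) (A i)) :
    GoodL (∑ i ∈ S, r i) ∧ PresT T (∑ i ∈ S, r i) (∑ i ∈ S, A i) := by
  classical
  induction S using Finset.induction_on with
  | empty => exact ⟨GoodL.zero, PresT.zero⟩
  | insert x S hx ih =>
    rw [Finset.sum_insert hx, Finset.sum_insert hx]
    have h1 := h x (Finset.mem_insert_self _ _)
    have h2 := ih fun j hj => h j (Finset.mem_insert_of_mem hj)
    exact ⟨h1.1.add h2.1, h1.2.add h2.2⟩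

/-- On right coefficients the differential of the operator complex is the Koszul differential. -/
theorem presT_dL {r : (Fin N → Bool) → Idx N n → Loc N} {ω : (Fin N → Bool) → LOp N n}
    (h : ∀ δ, GoodL (r δ) ∧ PresT TR (r δ) (ω δ)) (δ : Fin N → Bool) :
    GoodL (fun a => kd (fun δ K => r δ (setK a K)) δ (a.1 0)) ∧
    PresT TR (fun a => kd (fun δ K => r δ (setK a K)) δ (a.1 0)) (dL ω δ) := by
  have := presT_sum (T := TR) Finset.univ (r := fun i => if δ i = true then
      sg i δ • (fun b : Idx N n => if 0 < b.1 0 i then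
        r (Function.update δ i false) (setK b (dec i (b.1 0))) else 0) else 0)
    (A := fun i => if δ i = true then sg i δ • dop i (ω (Function.update δ i false)) else 0)
    fun i _ => by
      by_cases hi : δ i = true
      · simp only [if_pos hi]
        have := presT_dop i (h (Function.update δ i false)).1 (h (Function.update δ i false)).2
        exact ⟨this.1.smul _, this.2.smul _⟩
      · simp only [if_neg hi]
        exact ⟨GoodL.zero, PresT.zero⟩
  have e : (fun a : Idx N n => kd (fun δ K => r δ (setK a K)) δ (a.1 0)) =
      ∑ i, if δ i = true then
        sg i δ • (fun b : Idx N n => if 0 < b.1 0 i then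
          r (Function.update δ i false) (setK b (dec i (b.1 0))) else 0) else 0 := by
    ext1 a
    rw [Finset.sum_apply]
    refine Finset.sum_congr rfl fun i _ => ?_
    by_cases hi : δ i = true <;> by_cases hk : 0 < a.1 0 i <;> simp [hi, hk]
  rw [e]
  exact this

/-- The operator with given right coefficients. -/
noncomputable def ofData (r : Idx N n → Loc N) : LOp N n := fun f => ∑ᶠ a, TR a f (r a)

theorem presT_ofData {r : Idx N n → Loc N} (hr : GoodL r) : PresT TR r (ofData r) := by
  intro f
  obtain ⟨S0, hS0⟩ := exists_presT levelBdd_TR hr f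
  refine (eventually_ge_atTop S0).mono fun S hS => ?_
  refine finsum_eq_sum_of_support_subset _ fun a ha => ?_
  by_contra h
  exact ha (hS0 a fun h' => h (hS h'))

theorem presT_eq {T : Idx N n → (Fin n → Loc N) → (Loc N →ₗ[ℝ] Loc N)} {r : Idx N n → Loc N}
    {A B : LOp N n} (hA : PresT T r A) (hB : PresT T r B) : A = B := by
  ext1 f
  obtain ⟨S, h1, h2⟩ := ((hA f).and (hB f)).exists
  rw [h1, h2]

/-- Right coefficients are determined by the operator. -/
theorem presT_inj {r s : Idx N n → Loc N} (hr : GoodL r) (hs : GoodL s) {A : LOp N n}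
    (h1 : PresT TR r A) (h2 : PresT TR s A) : r = s := by
  have h3 := presT_unique (hr.add (hs.smul (-1))) (by
    have := h1.add (h2.smul (-1))
    rwa [neg_one_smul ℝ A, add_neg_cancel] at this)
  rw [neg_one_smul ℝ s] at h3
  exact add_neg_eq_zero.1 h3

/-- A closed operator-valued form of weight `w` is exact, provided that its top-degree part has
vanishing characteristic. -/
theorem exact_dL {w : ℤ} {ω : (Fin N → Bool) → LOp N n} (hR : ∀ δ, ω δ ∈ IsR N n)
    (hw : ∀ δ, (wt δ : ℤ) ≠ w → ω δ = 0) (hcl : ∀ δ, dL ω δ = 0)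
    (htop : ω (fun _ => true) ∈ RChi N n) :
    ∃ η : (Fin N → Bool) → LOp N n, (∀ δ, η δ ∈ IsR N n) ∧
      (∀ δ, (wt δ : ℤ) ≠ w - 1 → η δ = 0) ∧ η (fun _ => true) = 0 ∧ ∀ δ, dL η δ = ω δ := by
  choose r hr1 hr2 using hR
  have hr0 : ∀ δ, ω δ = 0 → r δ = 0 := fun δ h =>
    presT_unique (hr1 δ) (by have := hr2 δ; rwa [h] at this)
  have htop' : ∀ a, a.1 0 = 0 → r (fun _ => true) a = 0 := by
    obtain ⟨r', h1, h2, h3⟩ := htop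
    rw [presT_inj (hr1 _) h1 (hr2 _) h2]
    exact h3
  have hcl' : ∀ (a : Idx N n) δ K, kd (fun δ K => r δ (setK a K)) δ K = 0 := by
    intro a δ K
    obtain ⟨h1, h2⟩ := presT_dL (r := r) (ω := ω) (fun δ => ⟨hr1 δ, hr2 δ⟩) δ
    rw [hcl] at h2
    simpa using congrFun (presT_unique h1 h2) (setK a K)
  set s : (Fin N → Bool) → Idx N n → Loc N := fun δ a =>
    kh w (fun δ K => r δ (setK a K)) δ (a.1 0) with hs
  have hs0 : ∀ δ, (∀ i, δ i = false → r (Function.update δ i true) = 0) → s δ = 0 := by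
    intro δ h
    ext1 a
    refine (congrArg _ (Finset.sum_eq_zero fun i _ => ?_)).trans (smul_zero _)
    split_ifs with hi
    · change _ • r (Function.update δ i true) _ = 0
      rw [h i hi]; simp
    · rfl
  have hsG : ∀ δ, GoodL (s δ) := by
    intro δ m
    refine (Set.finite_iUnion fun i : Fin N =>
      ((hr1 (Function.update δ i true) m).preimage (up_injective i).injOn)).subset ?_
    rintro a ⟨h, hm⟩
    by_contra hcon
    refine h ((congrArg _ (Finset.sum_eq_zero fun i _ => ?_)).trans (smul_zero _))
    split_ifs with hi
    · have : r (Function.update δ i true) (up i a) = 0 := by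
        by_contra h'
        exact hcon (Set.mem_iUnion.2 ⟨i, h', by simpa [up] using hm⟩)
      simp only
      rw [show setK a (inc i (a.1 0)) = up i a from rfl, this, smul_zero]
    · rfl
  have hof0 : ofData (0 : Idx N n → Loc N) = 0 := presT_eq (presT_ofData GoodL.zero) PresT.zero
  refine ⟨fun δ => ofData (s δ), fun δ => ⟨s δ, hsG δ, presT_ofData (hsG δ)⟩, fun δ hδ => ?_, ?_,
    fun δ => ?_⟩
  · simp only
    rw [hs0, hof0]
    intro i hi
    refine hr0 _ (hw _ ?_)
    rw [wt_set hi]; push_cast; omega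
  · change ofData (s _) = 0
    rw [hs0, hof0]
    intro i hi
    simp at hi
  · have h1 := presT_dL (r := s) (ω := fun δ => ofData (s δ))
      (fun δ => ⟨hsG δ, presT_ofData (hsG δ)⟩) δ
    have e : (fun a : Idx N n => kd (fun δ K => s δ (setK a K)) δ (a.1 0)) = r δ := by
      ext1 a
      have := kd_kh (R := fun δ K => r δ (setK a K)) (w := w)
        (fun δ hδ => by ext1 K; change r δ _ = 0; rw [hr0 δ (hw δ hδ)]; rfl)
        (htop' _ (by simp)) (hcl' a) δ (a.1 0)
      simp only [setK_self] at this
      rw [← this]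
      simp only [hs, setK_fst_zero, setK_setK]
    rw [e] at h1
    exact presT_eq h1.2 (hr2 δ)

end OperatorComplex
end JetBundle

/-! ### The endomorphism complex and its cycles -/

namespace JetBundle
open Filter

section Lift
variable {N n : ℕ} [NeZero n]

/-- A double sum of antisymmetric terms vanishes. -/
theorem sum_antisymm {ι V : Type*} [Fintype ι] [AddCommGroup V] [Module ℝ V] {T : ι → ι → V}
    (h : ∀ p q, T p q = -T q p) : ∑ p, ∑ q, T p q = 0 := by
  have h1 : ∑ p, ∑ q, T p q = -∑ p, ∑ q, T p q := by
    conv_lhs => rw [Finset.sum_comm]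
    simp only [← Finset.sum_neg_distrib]
    exact Finset.sum_congr rfl fun p _ => Finset.sum_congr rfl fun q _ => h q p
  have h2 : (2 : ℝ) • ∑ p, ∑ q, T p q = 0 := by
    rw [two_smul]
    exact add_eq_zero_iff_eq_neg.2 h1
  exact (smul_eq_zero.1 h2).resolve_left two_ne_zero

theorem smul_eq_neg_smul {c d : ℝ} (h : c = -d) (A : LOp N n) : c • A = -(d • A) := by
  rw [h, neg_smul d A]

theorem dop_comm (i j : Fin N) (A : LOp N n) : dop i (dop j A) = dop j (dop i A) := by
  ext1 f; exact dD_dD i j (A f)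

theorem dop_pre (i : Fin N) (i' : Fin N) (j : Fin n) (A : LOp N n) :
    dop i (pre i' j A) = pre i' j (dop i A) := rfl

theorem pre_comm (i i' : Fin N) (j j' : Fin n) (A : LOp N n) :
    pre i j (pre i' j' A) = pre i' j' (pre i j A) := by
  ext1 f
  change A _ = A _
  congr 1
  by_cases h : j = j'
  · subst h
    simp [dD_dD i' i]
  · rw [Function.update_of_ne (Ne.symm h), Function.update_of_ne h, Function.update_comm h]

theorem dL_sub (ω η : (Fin N → Bool) → LOp N n) : dL (ω - η) = dL ω - dL η := by
  ext1 δ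
  simp only [dL, Pi.sub_apply, ← Finset.sum_sub_distrib]
  refine Finset.sum_congr rfl fun i _ => ?_
  split_ifs
  · rw [map_sub, smul_sub]
  · rw [sub_zero]

theorem dL_smul (c : ℝ) (ω : (Fin N → Bool) → LOp N n) : dL (c • ω) = c • dL ω := by
  ext1 δ
  simp only [dL, Pi.smul_apply, Finset.smul_sum]
  refine Finset.sum_congr rfl fun i _ => ?_
  split_ifs
  · rw [map_smul, smul_comm]
  · rw [smul_zero]

theorem dL_zero : dL (0 : (Fin N → Bool) → LOp N n) = 0 := by
  simpa using dL_smul (0 : ℝ) (0 : (Fin N → Bool) → LOp N n)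

theorem dL_dL (ω : (Fin N → Bool) → LOp N n) : dL (dL ω) = 0 := by
  ext1 δ
  have e : dL (dL ω) δ = ∑ i, ∑ j, if i ≠ j ∧ δ i = true ∧ δ j = true then
      ((if i < j then -1 else 1) * (sg i δ * sg j δ)) •
        dop i (dop j (ω (Function.update (Function.update δ i false) j false))) else 0 := by
    refine Finset.sum_congr rfl fun i _ => ?_
    by_cases hi : δ i = true
    · rw [if_pos hi, dL, map_sum, Finset.smul_sum]
      refine Finset.sum_congr rfl fun j _ => ?_
      by_cases hij : i = j
      · subst hij; simp
      · rw [Function.update_of_ne (Ne.symm hij)]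
        by_cases hj : δ j = true
        · rw [if_pos hj, if_pos ⟨hij, hi, hj⟩, map_smul, smul_smul, sg_unset hi]
          congr 1; ring
        · rw [if_neg hj, if_neg fun h => hj h.2.2]; simp
    · rw [if_neg hi, Finset.sum_eq_zero]
      exact fun j _ => if_neg fun h => hi h.2.1
  rw [e]
  refine sum_antisymm fun i j => ?_
  by_cases h : i ≠ j ∧ δ i = true ∧ δ j = true
  · have hs : j ≠ i ∧ δ j = true ∧ δ i = true := ⟨h.1.symm, h.2.2, h.2.1⟩
    rw [if_pos h, if_pos hs, dop_comm, Function.update_comm h.1]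
    refine smul_eq_neg_smul ?_ _
    rcases lt_or_gt_of_ne h.1 with h' | h'
    · simp only [h', not_lt_of_gt h', if_true, if_false]; ring
    · simp only [h', not_lt_of_gt h', if_true, if_false]; ring
  · rw [if_neg h, if_neg fun h' => h ⟨h'.1.symm, h'.2.2, h'.2.1⟩, neg_zero]

/-- Matrices of operators on tensor products of horizontal forms. -/
abbrev LMat (N n : ℕ) := (Fin n → (Fin N → Bool)) → (Fin N → Bool) → LOp N n

/-- Insert `dx^i` into the `j`-th input form, where `p = (j, i)`. -/
def ins (p : Fin n × Fin N) (εs : Fin n → (Fin N → Bool)) : Fin n → (Fin N → Bool) :=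
  Function.update εs p.1 (Function.update (εs p.1) p.2 true)

/-- The Koszul sign of inserting `dx^i` into the `j`-th input form, where `p = (j, i)`. -/
noncomputable def sgs (p : Fin n × Fin N) (εs : Fin n → (Fin N → Bool)) : ℝ :=
  (-1) ^ ((∑ l ∈ Finset.univ.filter fun l => l < p.1, wt (εs l)) + pos p.2 (εs p.1))

theorem ins_apply {p q : Fin n × Fin N} (h : p ≠ q) (εs : Fin n → (Fin N → Bool)) :
    ins p εs q.1 q.2 = εs q.1 q.2 := by
  unfold ins
  by_cases h1 : q.1 = p.1
  · rw [h1, Function.update_self, Function.update_of_ne]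
    exact fun h2 => h (Prod.ext h1.symm h2.symm)
  · rw [Function.update_of_ne h1]

theorem ins_self (p : Fin n × Fin N) (εs : Fin n → (Fin N → Bool)) :
    ins p εs p.1 p.2 = true := by simp [ins]

theorem ins_comm (p q : Fin n × Fin N) (εs : Fin n → (Fin N → Bool)) :
    ins p (ins q εs) = ins q (ins p εs) := by
  by_cases h : p = q
  · rw [h]
  ext j i
  by_cases hp : (j, i) = p
  · subst hp
    rw [ins_self, ins_apply (q := (j, i)) (Ne.symm h), ins_self]
  · rw [ins_apply (q := (j, i)) (Ne.symm hp)]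
    by_cases hq : (j, i) = q
    · subst hq; rw [ins_self, ins_self]
    · rw [ins_apply (q := (j, i)) (Ne.symm hq), ins_apply (q := (j, i)) (Ne.symm hq),
        ins_apply (q := (j, i)) (Ne.symm hp)]

theorem sgs_ins {p q : Fin n × Fin N} {εs : Fin n → (Fin N → Bool)} (hp : εs p.1 p.2 = false) :
    sgs q (ins p εs) = (if p.1 < q.1 ∨ (p.1 = q.1 ∧ p.2 < q.2) then -1 else 1) * sgs q εs := by
  obtain ⟨j, i⟩ := p
  obtain ⟨j', i'⟩ := q
  have hs : ∀ l, wt (ins (j, i) εs l) = wt (εs l) + if l = j then 1 else 0 := by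
    intro l
    by_cases h : l = j
    · subst h; simp [ins, wt_set hp]
    · simp [ins, h]
  have hs' : ∑ l ∈ Finset.univ.filter (fun l => l < j'), wt (ins (j, i) εs l) =
      (∑ l ∈ Finset.univ.filter (fun l => l < j'), wt (εs l)) + if j < j' then 1 else 0 := by
    simp only [hs, Finset.sum_add_distrib]
    congr 1
    rw [Finset.sum_ite_eq']
    simp
  have hpos : pos i' (ins (j, i) εs j') = pos i' (εs j') + if j = j' ∧ i < i' then 1 else 0 := by
    by_cases h : j = j'
    · subst h; simp [ins, pos_set hp]
    · simp [ins, h, Ne.symm h]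
  simp only [sgs, hs', hpos]
  rcases lt_trichotomy j j' with h | h | h
  · simp only [h, ne_of_lt h, if_true, false_and, if_false, true_or]; ring
  · subst h
    by_cases h' : i < i'
    · simp only [lt_irrefl, h', true_and, if_true, if_false, false_or]; ring
    · simp only [lt_irrefl, h', if_false, false_or, and_false]; ring
  · simp only [not_lt_of_gt h, ne_of_gt h, if_false, false_and, or_self]; ring

/-- Precomposition with the differential of the tensor product of the horizontal complexes. -/
noncomputable def src (F : LMat N n) : LMat N n := fun εs δ =>
  ∑ p : Fin n × Fin N, if εs p.1 p.2 = false then sgs p εs • pre p.2 p.1 (F (ins p εs) δ) else 0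

theorem src_sub (F G : LMat N n) : src (F - G) = src F - src G := by
  ext1 εs; ext1 δ
  simp only [src, Pi.sub_apply, ← Finset.sum_sub_distrib]
  refine Finset.sum_congr rfl fun i _ => ?_
  split_ifs
  · rw [map_sub, smul_sub]
  · rw [sub_zero]

theorem src_smul (c : ℝ) (F : LMat N n) : src (c • F) = c • src F := by
  ext1 εs; ext1 δ
  simp only [src, Pi.smul_apply, Finset.smul_sum]
  refine Finset.sum_congr rfl fun i _ => ?_
  split_ifs
  · rw [map_smul, smul_comm]
  · rw [smul_zero]

theorem src_src (F : LMat N n) : src (src F) = 0 := by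
  ext1 εs; ext1 δ
  have e : src (src F) εs δ = ∑ p : Fin n × Fin N, ∑ q : Fin n × Fin N,
      if p ≠ q ∧ εs p.1 p.2 = false ∧ εs q.1 q.2 = false then
      ((if p.1 < q.1 ∨ (p.1 = q.1 ∧ p.2 < q.2) then -1 else 1) * (sgs p εs * sgs q εs)) •
        pre p.2 p.1 (pre q.2 q.1 (F (ins q (ins p εs)) δ)) else 0 := by
    refine Finset.sum_congr rfl fun p _ => ?_
    by_cases hp : εs p.1 p.2 = false
    · rw [if_pos hp, src, map_sum, Finset.smul_sum]
      refine Finset.sum_congr rfl fun q _ => ?_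
      by_cases hpq : p = q
      · subst hpq; simp [ins_self]
      · rw [ins_apply hpq]
        by_cases hq : εs q.1 q.2 = false
        · rw [if_pos hq, if_pos ⟨hpq, hp, hq⟩, map_smul, smul_smul, sgs_ins hp]
          congr 1; ring
        · rw [if_neg hq, if_neg fun h => hq h.2.2]; simp
    · rw [if_neg hp, Finset.sum_eq_zero]
      exact fun j _ => if_neg fun h => hp h.2.1
  rw [e]
  refine sum_antisymm fun p q => ?_
  by_cases h : p ≠ q ∧ εs p.1 p.2 = false ∧ εs q.1 q.2 = false
  · have hs : q ≠ p ∧ εs q.1 q.2 = false ∧ εs p.1 p.2 = false := ⟨h.1.symm, h.2.2, h.2.1⟩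
    rw [if_pos h, if_pos hs, pre_comm, ins_comm]
    refine smul_eq_neg_smul ?_ _
    have h0 : p.1 = q.1 → p.2 ≠ q.2 := fun h1 h2 => h.1 (Prod.ext h1 h2)
    rcases lt_trichotomy p.1 q.1 with h1 | h1 | h1
    · simp only [h1, not_lt_of_gt h1, ne_of_gt h1, false_and, or_false, true_or, if_true, if_false]
      ring
    · rcases lt_or_gt_of_ne (h0 h1) with h2 | h2
      · simp only [h1, lt_irrefl, h2, not_lt_of_gt h2, and_false, and_self, or_false, or_true,
          if_true, if_false]
        ring
      · simp only [h1, lt_irrefl, h2, not_lt_of_gt h2, and_false, and_self, or_false, or_true,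
          if_true, if_false]
        ring
    · simp only [h1, not_lt_of_gt h1, ne_of_gt h1, false_and, or_false, true_or, if_true, if_false]
      ring
  · rw [if_neg h, if_neg fun h' => h ⟨h'.1.symm, h'.2.2, h'.2.1⟩, neg_zero]

/-- The differentials on the output and on the inputs commute. -/
theorem dL_src (F : LMat N n) (εs : Fin n → (Fin N → Bool)) (δ : Fin N → Bool) :
    dL (src F εs) δ = src (fun εs => dL (F εs)) εs δ := by
  have e1 : dL (src F εs) δ = ∑ i, ∑ p : Fin n × Fin N,
      if δ i = true ∧ εs p.1 p.2 = false then (sg i δ * sgs p εs) •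
        dop i (pre p.2 p.1 (F (ins p εs) (Function.update δ i false))) else 0 := by
    refine Finset.sum_congr rfl fun i _ => ?_
    by_cases hi : δ i = true
    · rw [if_pos hi, src, map_sum, Finset.smul_sum]
      refine Finset.sum_congr rfl fun p _ => ?_
      by_cases hp : εs p.1 p.2 = false
      · rw [if_pos hp, if_pos ⟨hi, hp⟩, map_smul, smul_smul]
      · rw [if_neg hp, if_neg fun h => hp h.2, map_zero, smul_zero]
    · rw [if_neg hi, Finset.sum_eq_zero]
      exact fun p _ => if_neg fun h => hi h.1
  rw [e1, Finset.sum_comm]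
  refine Finset.sum_congr rfl fun p _ => ?_
  by_cases hp : εs p.1 p.2 = false
  · rw [if_pos hp]
    change _ = sgs p εs • pre p.2 p.1 (∑ i, _)
    rw [map_sum, Finset.smul_sum]
    refine Finset.sum_congr rfl fun i _ => ?_
    by_cases hi : δ i = true
    · rw [if_pos hi, if_pos ⟨hi, hp⟩, map_smul, smul_smul, dop_pre, mul_comm]
    · rw [if_neg hi, if_neg fun h => hi h.1, map_zero, smul_zero]
  · rw [if_neg hp, Finset.sum_eq_zero]
    exact fun p _ => if_neg fun h => hp h.2

/-- The differential of the endomorphism complex, on operators on local functions. -/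
noncomputable def deltaL (k : ℤ) (F : LMat N n) : LMat N n := fun εs δ =>
  dL (F εs) δ - (-1 : ℝ) ^ k • src F εs δ

theorem deltaL_sub (k : ℤ) (F G : LMat N n) : deltaL k (F - G) = deltaL k F - deltaL k G := by
  ext1 εs; ext1 δ
  simp only [deltaL, Pi.sub_apply, dL_sub, src_sub, smul_sub]
  abel

theorem deltaL_add (k : ℤ) (F G : LMat N n) : deltaL k (F + G) = deltaL k F + deltaL k G := by
  rw [← sub_eq_iff_eq_add, ← deltaL_sub, add_sub_cancel_right]

/-- `δ` squares to zero. -/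
theorem deltaL_deltaL (k : ℤ) (F : LMat N n) : deltaL (k - 1) (deltaL k F) = 0 := by
  have h1 : deltaL k F = (fun εs => dL (F εs)) - (-1 : ℝ) ^ k • src F := rfl
  have h2 : ∀ εs, deltaL k F εs = dL (F εs) - (-1 : ℝ) ^ k • src F εs := fun _ => rfl
  have hs : (-1 : ℝ) ^ (k - 1) = -(-1 : ℝ) ^ k := by
    rw [zpow_sub_one₀ (by norm_num)]; norm_num
  ext1 εs; ext1 δ
  rw [deltaL, h2, dL_sub, dL_smul, dL_dL, h1, src_sub, src_smul, src_src, hs]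
  simp only [Pi.sub_apply, Pi.smul_apply, Pi.zero_apply, smul_zero, sub_zero, zero_sub, dL_src]
  rw [neg_smul ((-1 : ℝ) ^ k) (src (fun εs => dL (F εs)) εs δ), sub_neg_eq_add, neg_add_cancel]

/-- The total homological degree of a tensor product of basis forms. -/
def sdeg (εs : Fin n → (Fin N → Bool)) : ℕ := ∑ j, (N - wt (εs j))

theorem sdeg_ins {p : Fin n × Fin N} {εs : Fin n → (Fin N → Bool)} (hp : εs p.1 p.2 = false) :
    sdeg (ins p εs) + 1 = sdeg εs := by
  unfold sdeg
  rw [← Finset.add_sum_erase _ _ (Finset.mem_univ p.1),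
    ← Finset.add_sum_erase (a := p.1) _ (fun j => N - wt (εs j)) (Finset.mem_univ p.1)]
  have : ∑ x ∈ Finset.univ.erase p.1, (N - wt (ins p εs x)) =
      ∑ x ∈ Finset.univ.erase p.1, (N - wt (εs x)) := by
    refine Finset.sum_congr rfl fun x hx => ?_
    rw [ins, Function.update_of_ne (Finset.ne_of_mem_erase hx)]
  rw [this, ins, Function.update_self]
  have h1 := wt_set hp
  have h2 := wt_le (Function.update (εs p.1) p.2 true)
  omega

theorem cast_sdeg (εs : Fin n → (Fin N → Bool)) :
    (sdeg εs : ℤ) = ∑ j, ((N : ℤ) - (wt (εs j) : ℤ)) := by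
  unfold sdeg
  push_cast [Nat.cast_sub (wt_le _)]
  rfl

theorem sdeg_le (εs : Fin n → (Fin N → Bool)) : sdeg εs ≤ n * N := by
  refine (Finset.sum_le_sum fun j _ => Nat.sub_le N (wt (εs j))).trans ?_
  simp

theorem sdeg_eq_zero {εs : Fin n → (Fin N → Bool)} (h : sdeg εs = 0) : εs = fun _ _ => true := by
  ext1 j
  refine (wt_eq_iff _).1 (le_antisymm (wt_le _) ?_)
  have := Finset.sum_eq_zero_iff.1 h j (Finset.mem_univ j)
  omega

/-- `F` has degree `k`. -/
def GradL (k : ℤ) (F : LMat N n) : Prop :=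
  ∀ εs δ, (wt δ : ℤ) ≠ N - k - sdeg εs → F εs δ = 0

theorem IsR_dop (i : Fin N) {A : LOp N n} (hA : A ∈ IsR N n) : dop i A ∈ IsR N n :=
  RChi_le (RChi_dD i hA)

theorem dL_mem_RChi {ω : (Fin N → Bool) → LOp N n} (h : ∀ δ, ω δ ∈ IsR N n) (δ : Fin N → Bool) :
    dL ω δ ∈ RChi N n := by
  refine Submodule.sum_mem _ fun i _ => ?_
  split_ifs
  · exact Submodule.smul_mem _ _ (RChi_dD i (h _))
  · exact Submodule.zero_mem _

theorem src_mem_IsR {F : LMat N n} (h : ∀ εs δ, F εs δ ∈ IsR N n) (εs : Fin n → (Fin N → Bool))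
    (δ : Fin N → Bool) : src F εs δ ∈ IsR N n := by
  refine Submodule.sum_mem _ fun p _ => ?_
  split_ifs
  · exact Submodule.smul_mem _ _ (IsR_pre p.2 p.1 (h _ _))
  · exact Submodule.zero_mem _

theorem deltaL_mem_IsR (k : ℤ) {F : LMat N n} (h : ∀ εs δ, F εs δ ∈ IsR N n)
    (εs : Fin n → (Fin N → Bool)) (δ : Fin N → Bool) : deltaL k F εs δ ∈ IsR N n :=
  Submodule.sub_mem _ (RChi_le (dL_mem_RChi (h εs) δ))
    (Submodule.smul_mem _ _ (src_mem_IsR h εs δ))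

theorem src_eq_zero {F : LMat N n} {εs : Fin n → (Fin N → Bool)} {δ : Fin N → Bool}
    (h : ∀ p : Fin n × Fin N, εs p.1 p.2 = false → F (ins p εs) δ = 0) : src F εs δ = 0 := by
  refine Finset.sum_eq_zero fun p _ => ?_
  split_ifs with hp
  · rw [h p hp, map_zero, smul_zero]
  · rfl

theorem deltaL_grad {k : ℤ} {F : LMat N n} (h : GradL k F) : GradL (k - 1) (deltaL k F) := by
  intro εs δ hd
  have h1 : dL (F εs) δ = 0 := by
    refine Finset.sum_eq_zero fun i _ => ?_
    split_ifs with hi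
    · rw [h, map_zero, smul_zero]
      have := wt_unset hi
      omega
    · rfl
  have h2 : src F εs δ = 0 := by
    refine src_eq_zero fun p hp => h _ _ ?_
    have := sdeg_ins hp
    omega
  rw [deltaL, h1, h2, smul_zero, sub_zero]

/-- A cycle of degree `k - 1` whose components of top output form-degree have vanishing
characteristic bounds a matrix of degree `k` without components of top output form-degree. -/
theorem exists_lift (k : ℤ) {G : LMat N n} (hG : ∀ εs δ, G εs δ ∈ IsR N n)
    (hgr : GradL (k - 1) G) (hcl : deltaL (k - 1) G = 0)
    (htop : ∀ εs, G εs (fun _ => true) ∈ RChi N n) :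
    ∃ X : LMat N n, (∀ εs δ, X εs δ ∈ IsR N n) ∧ GradL k X ∧ (∀ εs, X εs (fun _ => true) = 0) ∧
      deltaL k X = G := by
  -- construct `X` by recursion on the degree of the input forms
  suffices H : ∀ m : ℕ, ∃ X : LMat N n, (∀ εs δ, X εs δ ∈ IsR N n) ∧ GradL k X ∧
      (∀ εs, X εs (fun _ => true) = 0) ∧ ∀ εs, sdeg εs < m → ∀ δ, deltaL k X εs δ = G εs δ by
    obtain ⟨X, h1, h2, h3, h4⟩ := H (n * N + 1)
    refine ⟨X, h1, h2, h3, ?_⟩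
    ext1 εs; ext1 δ
    exact h4 εs (Nat.lt_succ_of_le (sdeg_le εs)) δ
  intro m
  induction m with
  | zero => exact ⟨0, fun _ _ => Submodule.zero_mem _, fun _ _ _ => rfl, fun _ => rfl,
      fun _ h => absurd h (Nat.not_lt_zero _)⟩
  | succ m ih =>
    obtain ⟨X, h1, h2, h3, h4⟩ := ih
    -- on inputs of degree `m` the error is `dL`-closed, as it vanishes on inputs of lower degree
    set E : LMat N n := G - deltaL k X with hE
    have hE0 : ∀ εs, sdeg εs < m → ∀ δ, E εs δ = 0 := fun εs h δ => by
      change G εs δ - deltaL k X εs δ = 0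
      rw [h4 εs h δ, sub_self]
    have hEcl : deltaL (k - 1) E = 0 := by
      rw [hE, deltaL_sub, hcl, deltaL_deltaL, sub_zero]
    have hex : ∀ εs, sdeg εs = m → ∃ η : (Fin N → Bool) → LOp N n, (∀ δ, η δ ∈ IsR N n) ∧
        (∀ δ, (wt δ : ℤ) ≠ N - (k - 1) - m - 1 → η δ = 0) ∧ η (fun _ => true) = 0 ∧
        ∀ δ, dL η δ = E εs δ := by
      intro εs hm
      refine exact_dL (fun δ => Submodule.sub_mem _ (hG εs δ) (deltaL_mem_IsR k h1 εs δ))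
        (fun δ hδ => ?_) (fun δ => ?_) ?_
      · change G εs δ - deltaL k X εs δ = 0
        rw [← hm] at hδ
        rw [hgr εs δ hδ, deltaL_grad h2 εs δ hδ, sub_zero]
      · have := congrFun (congrFun hEcl εs) δ
        rw [deltaL, src_eq_zero, smul_zero, sub_zero] at this
        · exact this
        · intro p hp
          refine hE0 _ ?_ δ
          have := sdeg_ins hp
          omega
      · refine Submodule.sub_mem _ (htop εs) (Submodule.sub_mem _ (dL_mem_RChi (h1 εs) _) ?_)
        rw [src_eq_zero fun p _ => h3 _, smul_zero]
        exact Submodule.zero_mem _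
    classical
    choose! η hη1 hη2 hη3 hη4 using hex
    set Z : LMat N n := fun εs => if sdeg εs = m then η εs else 0 with hZ
    have hZ0 : ∀ εs, sdeg εs < m → Z εs = 0 := fun εs h => if_neg (ne_of_lt h)
    refine ⟨X + Z, fun εs δ => Submodule.add_mem _ (h1 εs δ) ?_, fun εs δ hδ => ?_, fun εs => ?_,
      fun εs hm δ => ?_⟩
    · simp only [hZ]
      split_ifs with h
      · exact hη1 εs h δ
      · exact Submodule.zero_mem _
    · change X εs δ + Z εs δ = 0
      rw [h2 εs δ hδ, zero_add]
      simp only [hZ]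
      split_ifs with h
      · refine hη2 εs h δ ?_
        rw [h] at hδ; omega
      · rfl
    · change X εs _ + Z εs _ = 0
      rw [h3, zero_add]
      simp only [hZ]
      split_ifs with h
      · exact hη3 εs h
      · rfl
    · rw [deltaL_add]
      change deltaL k X εs δ + deltaL k Z εs δ = _
      have hs : src Z εs δ = 0 := src_eq_zero fun p hp => by
        rw [hZ0]; · rfl
        have := sdeg_ins hp
        omega
      have hd : deltaL k Z εs δ = dL (Z εs) δ := by rw [deltaL, hs, smul_zero, sub_zero]
      rw [hd]
      by_cases h : sdeg εs = m
      · have : Z εs = η εs := if_pos h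
        rw [this, hη4 εs h]
        change deltaL k X εs δ + (G εs δ - deltaL k X εs δ) = _
        abel
      · have h' : sdeg εs < m := by omega
        rw [hZ0 εs h', dL_zero, h4 εs h' δ]
        exact add_zero _

end Lift
end JetBundle

/-! ### Restriction to local functions and the characteristic -/

namespace JetBundle
open Filter

section Bridge
variable {N n : ℕ} [NeZero n]

theorem coe_PP (a : Idx N n) (g : Fin n → Loc N) : ((PP a g : Loc N) : Fn N) = fun p => ∏ j,
    if j = (0 : Fin n) then UPow (a.2 j) ((g j : Loc N) : Fn N) p
      else DPow (a.1 j) (UPow (a.2 j) ((g j : Loc N) : Fn N)) p := by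
  ext p
  rw [PP, SubmonoidClass.coe_finsetProd, Finset.prod_apply]
  refine Finset.prod_congr rfl fun j _ => ?_
  unfold fac
  split_ifs
  · rw [coe_UP]
  · rw [coe_DP, coe_UP]

theorem coe_sum_apply {ι : Type*} (S : Finset ι) (u : ι → Loc N) (pt : JetPt N) :
    ((∑ a ∈ S, u a : Loc N) : Fn N) pt = ∑ a ∈ S, ((u a : Loc N) : Fn N) pt := by
  rw [AddSubmonoidClass.coe_finsetSum, Finset.sum_apply]

theorem realizeP_coe {q : Idx N n → Loc N} (hq : GoodL q) (g : Fin n → Loc N) :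
    ∀ᶠ S : Finset (Idx N n) in atTop,
      realizeP (fun a => (q a : Fn N)) (fun j => (g j : Fn N)) =
        ((∑ a ∈ S, TL a g (q a) : Loc N) : Fn N) := by
  obtain ⟨S0, h0⟩ := exists_presT levelBdd_TL hq g
  refine (eventually_ge_atTop S0).mono fun S hS => ?_
  ext1 pt
  have e : ∀ a, ((q a : Loc N) : Fn N) pt *
      DPow (a.1 0) (fun p => ∏ j,
        if j = (0 : Fin n) then UPow (a.2 j) ((g j : Loc N) : Fn N) p
        else DPow (a.1 j) (UPow (a.2 j) ((g j : Loc N) : Fn N)) p) pt =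
      ((TL a g (q a) : Loc N) : Fn N) pt := by
    intro a
    rw [TL_apply, Subalgebra.coe_mul, Pi.mul_apply, coe_DP, coe_PP]
  rw [coe_sum_apply, realizeP, tsum_congr e]
  refine tsum_eq_sum fun a ha => ?_
  rw [h0 a fun h => ha (hS h)]
  rfl

/-- `A'` is the restriction of `A` to local functions. -/
def Restr (A : Op N n) (A' : LOp N n) : Prop :=
  ∀ g : Fin n → Loc N, A (fun j => (g j : Fn N)) = (A' g : Fn N)

theorem Restr.unique {A : Op N n} {A' B' : LOp N n} (h1 : Restr A A') (h2 : Restr A B') : A' = B' := by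
  ext1 g
  exact Subtype.ext ((h1 g).symm.trans (h2 g))

/-- Admissible coefficient data consists of elements of `Loc N`. -/
theorem good_lift {q : OpData N n} (hq : Good q) :
    ∃ q' : Idx N n → Loc N, GoodL q' ∧ q = fun a => (q' a : Fn N) := by
  refine ⟨fun a => ⟨q a, hq.1 a⟩, fun m => (hq.2 m).subset ?_, rfl⟩
  rintro a ⟨h, hm⟩
  exact ⟨fun h0 => h (Subtype.ext h0), hm⟩

theorem good_coe {q : Idx N n → Loc N} (hq : GoodL q) : Good fun a => (q a : Fn N) := by
  refine ⟨fun a => (q a).2, fun m => (hq m).subset ?_⟩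
  rintro a ⟨h, hm⟩
  exact ⟨fun h0 => h (congrArg Subtype.val h0), hm⟩

/-- Polarized presentations are presentations by left coefficients. -/
theorem presents_lift {q : Idx N n → Loc N} (hq : GoodL q) {A : Op N n}
    (h : Presents (fun a => (q a : Fn N)) A) : ∃ A' : LOp N n, Restr A A' ∧ PresT TL q A' := by
  have h1 : ∀ g : Fin n → Loc N, A (fun j => (g j : Fn N)) =
      realizeP (fun a => (q a : Fn N)) (fun j => (g j : Fn N)) := fun g => by
    ext1 pt; exact h _ (fun j => (g j).2) pt
  have h2 : ∀ g : Fin n → Loc N, ∃ v : Loc N, A (fun j => (g j : Fn N)) = (v : Fn N) := fun g => by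
    obtain ⟨S, hS⟩ := (realizeP_coe hq g).exists
    exact ⟨_, (h1 g).trans hS⟩
  choose A' hA' using h2
  refine ⟨A', hA', fun g => (realizeP_coe hq g).mono fun S hS => Subtype.ext ?_⟩
  rw [← hA', h1, hS]

theorem presents_coe {q : Idx N n → Loc N} (hq : GoodL q) {A : Op N n} {A' : LOp N n}
    (hA : Restr A A') (h : PresT TL q A') : Presents (fun a => (q a : Fn N)) A := by
  intro f hf pt
  obtain ⟨S, h1, h2⟩ := ((realizeP_coe hq fun j => ⟨f j, hf j⟩).and (h fun j => ⟨f j, hf j⟩)).exists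
  exact (congrFun (hA fun j => ⟨f j, hf j⟩) pt).trans
    ((congrFun (congrArg Subtype.val h2) pt).trans (congrFun h1 pt).symm)

theorem isPLDO_iff {A : Op N n} : IsPLDO A ↔ ∃ A' ∈ IsR N n, Restr A A' := by
  constructor
  · rintro ⟨q, hq, hA⟩
    obtain ⟨q', hq', rfl⟩ := good_lift hq
    obtain ⟨A', h1, h2⟩ := presents_lift hq' hA
    obtain ⟨r, h3, h4, -⟩ := presT_left_to_right hq' h2
    exact ⟨A', ⟨r, h3, h4⟩, h1⟩
  · rintro ⟨A', ⟨r, h3, h4⟩, h1⟩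
    obtain ⟨q, h5, h6⟩ := presT_right_to_left h3 h4
    exact ⟨_, good_coe h5, presents_coe h5 h1 h6⟩

/-- The characteristic consists of the right coefficients with `I_1 = 0`. -/
theorem chiData_coe {q r : Idx N n → Loc N} (hq : GoodL q)
    (hr : ∀ b, b.1 0 = 0 → r b = ∑ᶠ K, (-1 : ℝ) ^ (∑ i, K i) • DP K (q (setK b K))) :
    chiData (fun a => (q a : Fn N)) =
      fun b => ((if b.1 0 = 0 then r b else 0 : Loc N) : Fn N) := by
  ext1 b
  by_cases hb : b.1 0 = 0
  swap
  · rw [chiData, if_neg hb, if_neg hb]; rfl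
  rw [chiData, if_pos hb, if_pos hb, hr b hb]
  have hf : {K : MI N | q (setK b K) ≠ 0}.Finite :=
    ((hq (dg b)).preimage (setK_injective b).injOn).subset fun K hK => ⟨hK, le_of_eq (dg_setK b K)⟩
  have hz : ∀ K ∉ hf.toFinset, q (setK b K) = 0 := fun K hK => by simpa using hK
  ext1 pt
  rw [finsum_eq_sum_of_support_subset (s := hf.toFinset) _ (fun K hK => by
    by_contra h
    refine hK ?_
    simp only
    rw [hz K (by simpa using h), map_zero, smul_zero]), coe_sum_apply, tsum_eq_sum (s := hf.toFinset)]
  · refine Finset.sum_congr rfl fun K _ => ?_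
    rw [← coe_DP]; rfl
  · intro K hK
    have : q (Function.update b.1 0 K, b.2) = 0 := hz K hK
    rw [this, ← coe_DP, map_zero]
    exact mul_zero _

/-- Left and right coefficients coincide when they are concentrated at `I_1 = 0`. -/
theorem presT_TL_iff_TR {c : Idx N n → Loc N} (hc : ∀ b, b.1 0 ≠ 0 → c b = 0) (A : LOp N n) :
    PresT TL c A ↔ PresT TR c A := by
  have : ∀ a f, TL a f (c a) = TR a f (c a) := by
    intro a f
    by_cases h : a.1 0 = 0
    · rw [TL_apply, TR_apply, h]; simp
    · rw [hc a h, map_zero, map_zero]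
  simp only [PresT, this]

/-- An operator has vanishing characteristic if and only if it has right coefficients which vanish
at `I_1 = 0`. -/
theorem chiZero_iff {A : Op N n} : ChiZero A ↔ ∃ A' ∈ RChi N n, Restr A A' := by
  constructor
  · rintro ⟨q, hq, hA, h0⟩
    obtain ⟨q', hq', rfl⟩ := good_lift hq
    obtain ⟨A', h1, h2⟩ := presents_lift hq' hA
    obtain ⟨r, h3, h4, h5⟩ := presT_left_to_right hq' h2
    refine ⟨A', ⟨r, h3, h4, ?_⟩, h1⟩
    rw [chiData_coe hq' h5] at h0
    set c : Idx N n → Loc N := fun b => if b.1 0 = 0 then r b else 0 with hc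
    have hcG : GoodL c := fun m => (h3 m).subset fun b hb =>
      ⟨fun h => hb.1 (by simp [hc, h]), hb.2⟩
    have hc0 : PresT TL c 0 := by
      intro g
      refine (realizeP_coe hcG g).mono fun S hS => Subtype.ext ?_
      rw [← hS]
      ext1 pt
      exact (h0 _ (fun j => (g j).2) pt).symm
    have := presT_unique hcG ((presT_TL_iff_TR (fun b hb => if_neg hb) 0).1 hc0)
    intro b hb
    have h6 := congrFun this b
    exact (if_pos hb).symm.trans h6
  · rintro ⟨A', ⟨r, h3, h4, h5⟩, h1⟩
    obtain ⟨q, h6, h7⟩ := presT_right_to_left h3 h4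
    obtain ⟨s, h8, h9, h10⟩ := presT_left_to_right h6 h7
    have hs : s = r := presT_inj h8 h3 h9 h4
    refine ⟨_, good_coe h6, presents_coe h6 h1 h7, fun f hf pt => ?_⟩
    rw [chiData_coe h6 h10, hs]
    have : ∀ b : Idx N n, ((if b.1 0 = 0 then r b else 0 : Loc N) : Fn N) pt = 0 := by
      intro b
      split_ifs with h
      · rw [h5 b h]; rfl
      · rfl
    simp only [realizeP, this, zero_mul, tsum_zero]

open Classical in
/-- Extension by zero of an operator on local functions to all functions. -/
noncomputable def extOp (A' : LOp N n) : Op N n := fun f =>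
  if h : LocalTuple f then (A' fun j => ⟨f j, h j⟩ : Loc N) else 0

theorem rep_extOp (A' : LOp N n) : Restr (extOp A') A' := fun g => by
  have h : LocalTuple fun j => (g j : Fn N) := fun j => (g j).2
  exact dif_pos h

theorem extOp_zero : extOp (0 : LOp N n) = 0 := by
  ext1 f
  unfold extOp
  split_ifs <;> rfl

theorem rep_pre {A : Op N n} {A' : LOp N n} (h : Restr A A') (i : Fin N) (j : Fin n) :
    Restr (precompD A i j) (pre i j A') := by
  intro g
  refine Eq.trans ?_ (h _)
  refine congrArg A ?_
  ext1 l
  by_cases hl : l = j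
  · subst hl
    rw [Function.update_self, Function.update_self, coe_dD]
  · rw [Function.update_of_ne hl, Function.update_of_ne hl]

/-- `F'` is the restriction of the matrix `F` to local functions. -/
def RepM (F : DMat N n) (F' : LMat N n) : Prop := ∀ εs δ, Restr (F εs δ) (F' εs δ)

theorem repM_delta (k : ℤ) {F : DMat N n} {F' : LMat N n} (h : RepM F F') :
    RepM (deltaMat k F) (deltaL k F') := by
  intro εs δ g
  ext1 pt
  have h1 : (∑ i : Fin N, if δ i then (-1 : ℝ) ^ pos i δ *
      Dtot i (F εs (Function.update δ i false) (fun j => (g j : Fn N))) pt else 0) =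
      ((dL (F' εs) δ g : Loc N) : Fn N) pt := by
    rw [dL, Finset.sum_apply, coe_sum_apply]
    refine Finset.sum_congr rfl fun i _ => ?_
    split_ifs
    · rw [h, ← coe_dD]; rfl
    · rfl
  have h2 : (∑ j : Fin n, ∑ i : Fin N, if εs j i = false then
        (-1 : ℝ) ^ ((∑ l ∈ Finset.univ.filter fun l => l < j, wt (εs l)) + pos i (εs j)) *
          F (Function.update εs j (Function.update (εs j) i true)) δ
            (Function.update (fun j => (g j : Fn N)) j (Dtot i (g j : Fn N))) pt
      else 0) = ((src F' εs δ g : Loc N) : Fn N) pt := by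
    rw [src, Finset.sum_apply, coe_sum_apply, Fintype.sum_prod_type]
    refine Finset.sum_congr rfl fun j _ => Finset.sum_congr rfl fun i _ => ?_
    by_cases hi : εs j i = false
    · rw [if_pos hi, if_pos hi]
      have := congrFun (rep_pre (h (ins (j, i) εs) δ) i j g) pt
      exact congrArg _ this
    · rw [if_neg hi, if_neg hi]; rfl
  change _ - (-1 : ℝ) ^ k * _ = _ - (-1 : ℝ) ^ k * _
  exact congrArg₂ _ h1 (congrArg _ h2)

theorem matEqLoc_iff {F G : DMat N n} {F' G' : LMat N n} (hF : RepM F F') (hG : RepM G G') :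
    MatEqLoc F G ↔ F' = G' := by
  constructor
  · intro h
    ext1 εs; ext1 δ; ext1 g
    refine Subtype.ext ?_
    rw [← hF, ← hG]
    ext1 pt
    exact h εs δ _ (fun j => (g j).2) pt
  · rintro rfl εs δ g hg pt
    exact congrFun ((hF εs δ fun j => ⟨g j, hg j⟩).trans (hG εs δ fun j => ⟨g j, hg j⟩).symm) pt

theorem matZeroLoc_iff {F : DMat N n} {F' : LMat N n} (hF : RepM F F') :
    MatZeroLoc F ↔ F' = 0 :=
  matEqLoc_iff (G := 0) (G' := 0) hF fun _ _ _ => rfl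

/-- A matrix of local differential operators restricts to one on local functions, of the same degree. -/
theorem exists_repM {k : ℤ} {F : DMat N n} (hF : LDOMat F) (hk : GradedMat k F) :
    ∃ F' : LMat N n, RepM F F' ∧ (∀ εs δ, F' εs δ ∈ IsR N n) ∧ GradL k F' := by
  choose F' h1 h2 using fun εs δ => isPLDO_iff.1 (hF εs δ)
  refine ⟨F', h2, h1, fun εs δ hd => ?_⟩
  refine (h2 εs δ).unique ?_
  have : F εs δ = 0 := by
    by_contra h
    refine hd ?_
    rw [hk εs δ h, cast_sdeg]
  rw [this]
  exact fun _ => rfl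

/-- A matrix of operators on local functions extends to all functions, with the same degree. -/
theorem exists_ext {k : ℤ} {X : LMat N n} (hX : ∀ εs δ, X εs δ ∈ IsR N n) (hk : GradL k X) :
    ∃ F : DMat N n, RepM F X ∧ LDOMat F ∧ GradedMat k F := by
  refine ⟨fun εs δ => extOp (X εs δ), fun εs δ => rep_extOp _,
    fun εs δ => isPLDO_iff.2 ⟨_, hX εs δ, rep_extOp _⟩, fun εs δ h => ?_⟩
  by_contra hd
  refine h ?_
  simp only
  rw [hk εs δ (by rwa [cast_sdeg]), extOp_zero]

theorem chiZero_iff_of_rep {A : Op N n} {A' : LOp N n} (h : Restr A A') :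
    ChiZero A ↔ A' ∈ RChi N n := by
  rw [chiZero_iff]
  constructor
  · rintro ⟨B, hB, hr⟩
    rwa [h.unique hr]
  · exact fun h' => ⟨A', h', h⟩

end Bridge
end JetBundle

/-! ### Cycles, boundaries and the isomorphism -/

namespace JetBundle
open Filter

section Final
variable {N n : ℕ} [NeZero n]

theorem src_top (F : LMat N n) (δ : Fin N → Bool) : src F (fun _ _ => true) δ = 0 :=
  src_eq_zero fun _ hp => by simp at hp

/-- The input in which only `dx^i` is missing from the `j`-th form, where `p = (j, i)`. -/
def rem (p : Fin n × Fin N) : Fin n → (Fin N → Bool) :=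
  Function.update (fun _ _ => true) p.1 (Function.update (fun _ => true) p.2 false)

theorem rem_self (p : Fin n × Fin N) : rem p p.1 p.2 = false := by simp [rem]

theorem rem_ne {p q : Fin n × Fin N} (h : q ≠ p) : rem p q.1 q.2 = true := by
  unfold rem
  by_cases h1 : q.1 = p.1
  · rw [h1, Function.update_self, Function.update_of_ne]
    exact fun h2 => h (Prod.ext h1 h2)
  · rw [Function.update_of_ne h1]

theorem ins_rem (p : Fin n × Fin N) : ins p (rem p) = fun _ _ => true := by
  simp [ins, rem]

theorem src_rem (F : LMat N n) (p : Fin n × Fin N) (δ : Fin N → Bool) :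
    src F (rem p) δ = sgs p (rem p) • pre p.2 p.1 (F (fun _ _ => true) δ) := by
  rw [src, Finset.sum_eq_single p, if_pos (rem_self p), ins_rem]
  · intro q _ hq
    rw [if_neg (by rw [rem_ne hq]; simp)]
  · simp

theorem sgs_mul_self (p : Fin n × Fin N) (εs : Fin n → (Fin N → Bool)) :
    sgs p εs * sgs p εs = 1 := by
  unfold sgs
  rw [← mul_pow]; simp

/-- The leading component of a `0`-cycle stays of vanishing characteristic after precomposition
with a total derivative. -/
theorem cycle_pre {F : LMat N n} (hF : ∀ εs δ, F εs δ ∈ IsR N n) (hc : deltaL 0 F = 0)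
    (i : Fin N) (j : Fin n) :
    pre i j (F (fun _ _ => true) fun _ => true) ∈ RChi N n := by
  have h1 := congrFun (congrFun hc (rem (j, i))) fun _ => true
  rw [deltaL, src_rem, zpow_zero] at h1
  have h2 : dL (F (rem (j, i))) (fun _ => true) =
      sgs (j, i) (rem (j, i)) • pre i j (F (fun _ _ => true) fun _ => true) := by
    rw [← one_smul ℝ (sgs (j, i) (rem (j, i)) • pre i j (F (fun _ _ => true) fun _ => true))]
    exact sub_eq_zero.1 h1
  have h3 := Submodule.smul_mem _ (sgs (j, i) (rem (j, i))) (dL_mem_RChi (hF (rem (j, i))) fun _ => true)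
  rw [h2, smul_smul (sgs (j, i) (rem (j, i))), sgs_mul_self] at h3
  rwa [one_smul ℝ (pre i j (F (fun _ _ => true) fun _ => true))] at h3

/-- The leading component of a boundary has vanishing characteristic. -/
theorem boundary_top {H : LMat N n} (hH : ∀ εs δ, H εs δ ∈ IsR N n) (k : ℤ) :
    deltaL k H (fun _ _ => true) (fun _ => true) ∈ RChi N n := by
  rw [deltaL, src_top, smul_zero, sub_zero]
  exact dL_mem_RChi (hH _) _

/-- A `0`-cycle whose leading component has vanishing characteristic is a boundary. The grading
forces all other components with top-degree output to vanish. -/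
theorem cycle_bounds {F : LMat N n} (hF : ∀ εs δ, F εs δ ∈ IsR N n) (hg : GradL 0 F)
    (hc : deltaL 0 F = 0) (h : F (fun _ _ => true) (fun _ => true) ∈ RChi N n) :
    ∃ H : LMat N n, (∀ εs δ, H εs δ ∈ IsR N n) ∧ GradL 1 H ∧ deltaL 1 H = F := by
  obtain ⟨X, h1, h2, -, h4⟩ := exists_lift 1 hF (by simpa using hg) (by simpa using hc) fun εs => by
    by_cases hd : sdeg εs = 0
    · rwa [sdeg_eq_zero hd]
    · rw [hg εs _ (by rw [wt_true]; omega)]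
      exact Submodule.zero_mem _
  exact ⟨X, h1, h2, h4⟩

/-- An operator all of whose precompositions with total derivatives have vanishing characteristic
is the leading component of a `0`-cycle. -/
theorem exists_cycle {A : LOp N n} (hA : A ∈ IsR N n) (h : ∀ i j, pre i j A ∈ RChi N n) :
    ∃ F : LMat N n, (∀ εs δ, F εs δ ∈ IsR N n) ∧ GradL 0 F ∧ deltaL 0 F = 0 ∧
      F (fun _ _ => true) (fun _ => true) = A := by
  classical
  set M : LMat N n := fun εs δ => if sdeg εs = 0 ∧ wt δ = N then A else 0 with hM
  have hMR : ∀ εs δ, M εs δ ∈ IsR N n := fun εs δ => by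
    simp only [hM]
    split_ifs
    · exact hA
    · exact Submodule.zero_mem _
  have hMg : GradL 0 M := fun εs δ hd => if_neg fun h => hd (by omega)
  have hMpre : ∀ i j εs δ, pre i j (M εs δ) ∈ RChi N n := fun i j εs δ => by
    simp only [hM]
    split_ifs
    · exact h i j
    · rw [map_zero]; exact Submodule.zero_mem _
  obtain ⟨Y, h1, h2, h3, h4⟩ := exists_lift (G := deltaL 0 M) 0 (deltaL_mem_IsR 0 hMR)
    (deltaL_grad hMg) (deltaL_deltaL 0 M) fun εs => by
      refine Submodule.sub_mem _ (dL_mem_RChi (hMR εs) _)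
        (Submodule.smul_mem _ _ (Submodule.sum_mem _ fun p _ => ?_))
      split_ifs
      · exact Submodule.smul_mem _ _ (hMpre _ _ _ _)
      · exact Submodule.zero_mem _
  refine ⟨M - Y, fun εs δ => Submodule.sub_mem _ (hMR εs δ) (h1 εs δ), fun εs δ hd => ?_, ?_, ?_⟩
  · change M εs δ - Y εs δ = 0
    rw [hMg εs δ hd, h2 εs δ hd, sub_zero]
  · rw [deltaL_sub, h4, sub_self]
  · change M _ _ - Y _ _ = A
    rw [h3, sub_zero]
    exact if_pos ⟨by simp [sdeg, wt_true], wt_true⟩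

end Final

/-- `B_0` induces an isomorphism
`H_0(DEnd_*(n)) ≅ {A : χ(A ∘ d/dx^i_j) = 0 ∀ i,j} / {A : χ(A) = 0}`, unpacked as:
(1) `B_0` maps `0`-cycles into the numerator; (2) a `0`-cycle is a boundary iff
`χ(B_0 f) = 0` (injectivity of the induced map); (3) every element of the numerator agrees,
modulo the denominator, with `B_0` of some `0`-cycle (surjectivity). -/
theorem B0_induces_iso_H0 {N n : ℕ} [NeZero n] :
    (∀ F : DMat N n, LDOMat F → GradedMat 0 F → MatZeroLoc (deltaMat 0 F) →
        ∀ (i : Fin N) (j : Fin n), ChiZero (precompD (B0 F) i j)) ∧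
    (∀ F : DMat N n, LDOMat F → GradedMat 0 F → MatZeroLoc (deltaMat 0 F) →
        ((∃ H : DMat N n, LDOMat H ∧ GradedMat 1 H ∧ MatEqLoc (deltaMat 1 H) F) ↔
          ChiZero (B0 F))) ∧
    (∀ A : Op N n, IsPLDO A → (∀ (i : Fin N) (j : Fin n), ChiZero (precompD A i j)) →
        ∃ F : DMat N n, LDOMat F ∧ GradedMat 0 F ∧ MatZeroLoc (deltaMat 0 F) ∧
          ChiZero (fun g => B0 F g - A g)) := by
  refine ⟨fun F hF hg hc i j => ?_, fun F hF hg hc => ?_, fun A hA h => ?_⟩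
  · obtain ⟨F', hr, hR, -⟩ := exists_repM hF hg
    rw [matZeroLoc_iff (repM_delta 0 hr)] at hc
    exact (chiZero_iff_of_rep (rep_pre (hr _ _) i j)).2 (cycle_pre hR hc i j)
  · obtain ⟨F', hr, hR, hg'⟩ := exists_repM hF hg
    rw [matZeroLoc_iff (repM_delta 0 hr)] at hc
    have hB : ChiZero (B0 F) ↔ _ := chiZero_iff_of_rep (hr (fun _ _ => true) fun _ => true)
    rw [hB]
    constructor
    · rintro ⟨H, hH, hHg, hHF⟩
      obtain ⟨H', hr', hR', -⟩ := exists_repM hH hHg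
      rw [← (matEqLoc_iff (repM_delta 1 hr') hr).1 hHF]
      exact boundary_top hR' 1
    · intro h
      obtain ⟨H', hR', hg'', hd⟩ := cycle_bounds hR hg' hc h
      obtain ⟨H, hr', h1, h2⟩ := exists_ext hR' hg''
      exact ⟨H, h1, h2, (matEqLoc_iff (repM_delta 1 hr') hr).2 hd⟩
  · obtain ⟨A', hA', hr⟩ := isPLDO_iff.1 hA
    obtain ⟨F', hR', hg', hc, hF⟩ := exists_cycle hA' fun i j =>
      (chiZero_iff_of_rep (rep_pre hr i j)).1 (h i j)
    obtain ⟨F, hr', h1, h2⟩ := exists_ext hR' hg'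
    refine ⟨F, h1, h2, (matZeroLoc_iff (repM_delta 0 hr')).2 hc, ?_⟩
    refine (chiZero_iff_of_rep (A' := 0) fun g => ?_).2 (Submodule.zero_mem _)
    have e := hr' (fun _ _ => true) (fun _ => true) g
    rw [hF] at e
    change F (fun _ _ => true) (fun _ => true) (fun j => (g j : Fn N)) - A _ = _
    rw [e, hr g, sub_self]
    rfl

end JetBundle
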